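/- arXiv:2211.04506 — 12 statements merged into one kernel-verified Lean document; each statement's English description precedes it below -/
import Mathlib

section
/- Let n ≥ 3 be odd. Then the max cut space of K_n is all of ℝ^{C(n,2)}; in particular the max cut dimension of K_n equals C(n,2). -/
/-!
Write `n = 2k + 1`, so that the maximum cuts include all sets of size `k` or `k + 1`, and let `W` be
the span of their cut vectors. For distinct `a, x, y` and a set `R` of size `k - 1` avoiding them,
`v_{R∪x} - v_{R∪{x,a}} - v_{R∪y} + v_{R∪{y,a}} = 2 (e_{ax} - e_{ay})`
(`cutVec_combination`), so `W` contains the difference of any two edge vectors sharing an endpoint,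
hence of any two edge vectors (`edgeVec_sub_mem`). Modulo `W`, a cut vector `v_S` is therefore
`N • e` for every edge vector `e`, where `N` is the number of edges cut by `S`. Choosing a
maximum cut, where `N > 0`, every `e` lies in `W`.
-/

/-- Unordered pairs of distinct elements of `Fin n`, represented as ordered
pairs `(i, j)` with `i < j`; there are `n.choose 2` of them. -/
abbrev PairIdx (n : ℕ) := {p : Fin n × Fin n // p.1 < p.2}

/-- The cut indicator vector `v_S ∈ ℝ^{C(n,2)}`: the coordinate at the pair
`{i, j}` is `1` if exactly one of `i, j` lies in `S`, and `0` otherwise. -/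
noncomputable def cutVec (n : ℕ) (S : Finset (Fin n)) : PairIdx n → ℝ :=
  fun p => if (p.1.1 ∈ S ↔ p.1.2 ∈ S) then 0 else 1

/-- `S` is a maximum cut of the complete graph `K_n` (all edge weights `1`):
it maximizes `|S| * (n - |S|)`. -/
def IsMaxCut (n : ℕ) (S : Finset (Fin n)) : Prop :=
  ∀ T : Finset (Fin n), T.card * (n - T.card) ≤ S.card * (n - S.card)

/-- The standard basis vector of the edge `{i, j}` (for `i ≠ j`), symmetric in `i` and `j`. -/
noncomputable def edgeVec (n : ℕ) (i j : Fin n) : PairIdx n → ℝ :=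
  fun p => if (p.1.1 = i ∧ p.1.2 = j) ∨ (p.1.1 = j ∧ p.1.2 = i) then 1 else 0

/-- The span of the indicator vectors of the maximum cuts of `K_n`. -/
noncomputable def cutSpan (n : ℕ) : Submodule ℝ (PairIdx n → ℝ) :=
  Submodule.span ℝ
    {v : PairIdx n → ℝ | ∃ S : Finset (Fin n), IsMaxCut n S ∧ v = cutVec n S}

lemma edgeVec_comm (n : ℕ) (i j : Fin n) : edgeVec n i j = edgeVec n j i := by
  funext p
  simp only [edgeVec, or_comm]

lemma edgeVec_eq_single (n : ℕ) (p : PairIdx n) :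
    edgeVec n p.1.1 p.1.2 = Pi.single p 1 := by
  funext q
  obtain ⟨⟨i, j⟩, hij⟩ := p
  obtain ⟨⟨i', j'⟩, hij'⟩ := q
  simp only [edgeVec, Pi.single_apply, Subtype.mk.injEq, Prod.mk.injEq]
  simp only at hij hij'
  congr 1
  simp only [eq_iff_iff, or_iff_left_iff_imp]
  rintro ⟨rfl, rfl⟩
  exact absurd hij (lt_asymm hij')

lemma isMaxCut_of_card (k : ℕ) (S : Finset (Fin (2 * k + 1)))
    (hS : S.card = k ∨ S.card = k + 1) : IsMaxCut (2 * k + 1) S := by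
  intro T
  have hT : T.card ≤ 2 * k + 1 := by simpa using T.card_le_univ
  have hval : S.card * (2 * k + 1 - S.card) = k * (k + 1) := by
    rcases hS with h | h
    · rw [h, show 2 * k + 1 - k = k + 1 by omega]
    · rw [h, show 2 * k + 1 - (k + 1) = k by omega, mul_comm]
  rw [hval]
  generalize T.card = t at hT
  obtain ⟨m, hm⟩ := Nat.exists_eq_add_of_le hT
  rw [show 2 * k + 1 - t = m by omega]
  rcases Nat.lt_or_ge k t with h | h
  · obtain ⟨d, rfl⟩ := Nat.exists_eq_add_of_lt h
    have : k = m + d := by omega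
    subst this
    nlinarith
  · obtain ⟨d, rfl⟩ := Nat.exists_eq_add_of_le h
    have : m = t + 2 * d + 1 := by omega
    subst this
    nlinarith

lemma cutVec_combination (n : ℕ) (a x y : Fin n) (hax : a ≠ x) (hay : a ≠ y) (hxy : x ≠ y)
    (R : Finset (Fin n)) (ha : a ∉ R) (hx : x ∉ R) (hy : y ∉ R) :
    cutVec n (insert x R) - cutVec n (insert a (insert x R))
      - cutVec n (insert y R) + cutVec n (insert a (insert y R))
      = (2 : ℝ) • (edgeVec n a x - edgeVec n a y) := by
  funext p
  obtain ⟨⟨i, j⟩, hij⟩ := p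
  have hij' : i ≠ j := ne_of_lt hij
  simp only [cutVec, edgeVec, Pi.add_apply, Pi.sub_apply, Pi.smul_apply, Finset.mem_insert,
    smul_eq_mul]
  by_cases hia : i = a
  · subst hia
    by_cases hjx : j = x
    · subst hjx; simp [*, hij'.symm]; try norm_num
    by_cases hjy : j = y
    · subst hjy; simp [*, hij'.symm, hxy.symm]; try norm_num
    by_cases hjR : j ∈ R <;> simp [*, hij'.symm]
  by_cases hja : j = a
  · subst hja
    by_cases hix : i = x
    · subst hix; simp [*]; try norm_num
    by_cases hiy : i = y
    · subst hiy; simp [*, hxy.symm]; try norm_num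
    by_cases hiR : i ∈ R <;> simp [*]
  · simp [hia, hja]

lemma edgeVec_sub_mem_of_common (k : ℕ) (hk : 1 ≤ k) (a x y : Fin (2 * k + 1))
    (hax : a ≠ x) (hay : a ≠ y) :
    edgeVec _ a x - edgeVec _ a y ∈ cutSpan (2 * k + 1) := by
  by_cases hxy : x = y
  · simp [hxy]
  have hcard : ({a, x, y} : Finset (Fin (2 * k + 1))).card = 3 :=
    Finset.card_eq_three.2 ⟨a, x, y, hax, hay, hxy, rfl⟩
  obtain ⟨R, hR, hRk⟩ := Finset.exists_subset_card_eq
    (s := ({a, x, y} : Finset (Fin (2 * k + 1)))ᶜ) (n := k - 1) (by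
      rw [Finset.card_compl, hcard, Fintype.card_fin]; omega)
  have hout : ∀ z ∈ ({a, x, y} : Finset (Fin (2 * k + 1))), z ∉ R := fun z hz hzR =>
    Finset.mem_compl.1 (hR hzR) hz
  have ha : a ∉ R := hout a (by simp)
  have hx : x ∉ R := hout x (by simp)
  have hy : y ∉ R := hout y (by simp)
  have hmem : ∀ S : Finset (Fin (2 * k + 1)), (S.card = k ∨ S.card = k + 1) →
      cutVec _ S ∈ cutSpan (2 * k + 1) := fun S hS =>
    Submodule.subset_span ⟨S, isMaxCut_of_card k S hS, rfl⟩
  have c : ∀ z, z ∉ R → (insert z R).card = k := fun z hz => by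
    rw [Finset.card_insert_of_notMem hz]; omega
  have c' : ∀ z, z ∉ R → a ≠ z → (insert a (insert z R)).card = k + 1 := fun z hz haz => by
    rw [Finset.card_insert_of_notMem (by simp [haz, ha]), c z hz]
  have h := cutVec_combination _ a x y hax hay hxy R ha hx hy
  have h2 : (2 : ℝ) • (edgeVec _ a x - edgeVec _ a y) ∈ cutSpan (2 * k + 1) := by
    rw [← h]
    exact add_mem (sub_mem (sub_mem (hmem _ (.inl (c x hx))) (hmem _ (.inr (c' x hx hax))))
      (hmem _ (.inl (c y hy)))) (hmem _ (.inr (c' y hy hay)))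
  exact (Submodule.smul_mem_iff _ (by norm_num)).1 h2

lemma edgeVec_sub_mem (k : ℕ) (hk : 1 ≤ k) (a b c d : Fin (2 * k + 1))
    (hab : a ≠ b) (hcd : c ≠ d) :
    edgeVec _ a b - edgeVec _ c d ∈ cutSpan (2 * k + 1) := by
  by_cases had : a = d
  · subst had
    rw [edgeVec_comm _ c a]
    exact edgeVec_sub_mem_of_common k hk a b c hab hcd.symm
  · -- pass through the edge `{a, d}`
    have h1 := edgeVec_sub_mem_of_common k hk a b d hab had
    have h2 := edgeVec_sub_mem_of_common k hk d a c (Ne.symm had) hcd.symm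
    rw [edgeVec_comm _ d a, edgeVec_comm _ d c] at h2
    simpa using add_mem h1 h2

lemma single_mem (k : ℕ) (hk : 1 ≤ k) (q : PairIdx (2 * k + 1)) :
    (Pi.single q 1 : PairIdx (2 * k + 1) → ℝ) ∈ cutSpan (2 * k + 1) := by
  have hsub : ∀ p : PairIdx (2 * k + 1),
      (Pi.single p 1 - Pi.single q 1 : PairIdx (2 * k + 1) → ℝ) ∈ cutSpan (2 * k + 1) := by
    intro p
    rw [← edgeVec_eq_single, ← edgeVec_eq_single]
    exact edgeVec_sub_mem k hk _ _ _ _ p.2.ne q.2.ne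
  -- a maximum cut separating the endpoints of `q`, so that it cuts at least one edge
  obtain ⟨R, hqR, hRq, hRk⟩ := Finset.exists_subsuperset_card_eq
    (s := {q.1.1}) (t := ({q.1.2} : Finset (Fin (2 * k + 1)))ᶜ) (n := k)
    (by simpa using q.2.ne') (by simpa using hk)
    (by rw [Finset.card_compl]; simp; omega)
  have h1 : q.1.1 ∈ R := hqR (by simp)
  have h2 : q.1.2 ∉ R := fun h => by simpa using hRq h
  have hv : cutVec _ R ∈ cutSpan (2 * k + 1) :=
    Submodule.subset_span ⟨R, isMaxCut_of_card k R (.inl hRk), rfl⟩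
  have hN : 0 < ∑ p, cutVec _ R p := by
    refine Finset.sum_pos' (fun p _ => ?_) ⟨q, Finset.mem_univ _, ?_⟩
    · unfold cutVec; split_ifs <;> norm_num
    · simp [cutVec, h1, h2]
  have hsum : ∑ p, cutVec _ R p • (Pi.single p 1 - Pi.single q 1 : PairIdx (2 * k + 1) → ℝ)
      = cutVec _ R - (∑ p, cutVec _ R p) • Pi.single q 1 := by
    simp only [smul_sub, Finset.sum_sub_distrib, ← Finset.sum_smul]
    congr 1
    funext r
    simp [Finset.sum_apply, Pi.single_apply]
  have hmem := Submodule.sum_mem (cutSpan (2 * k + 1)) (t := Finset.univ)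
    fun p _ => Submodule.smul_mem _ (cutVec _ R p) (hsub p)
  rw [hsum] at hmem
  have h3 := sub_mem hv hmem
  rw [sub_sub_cancel] at h3
  exact (Submodule.smul_mem_iff _ hN.ne').1 h3

/-- For odd `n ≥ 3`, the max cut space of `K_n` (the span of the indicator
vectors of the maximum cuts) is all of `ℝ^{C(n,2)}`; in particular the max
cut dimension of `K_n` equals `C(n,2)`. -/
theorem maxCutSpace_complete_odd (n : ℕ) (hn : 3 ≤ n) (hodd : Odd n) :
    Submodule.span ℝ
        {v : PairIdx n → ℝ | ∃ S : Finset (Fin n), IsMaxCut n S ∧ v = cutVec n S} = ⊤ ∧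
    Module.finrank ℝ
        ↥(Submodule.span ℝ
          {v : PairIdx n → ℝ | ∃ S : Finset (Fin n), IsMaxCut n S ∧ v = cutVec n S})
      = n.choose 2 := by
  obtain ⟨k, rfl⟩ := hodd
  have htop : cutSpan (2 * k + 1) = ⊤ := by
    rw [eq_top_iff]
    intro v _
    rw [pi_eq_sum_univ' v]
    refine Submodule.sum_mem _ fun q _ => Submodule.smul_mem _ _ ?_
    exact single_mem k (by omega) q
  have hcard : Fintype.card (PairIdx (2 * k + 1)) = (2 * k + 1).choose 2 := by
    generalize 2 * k + 1 = m
    -- count the pairs by their larger element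
    rw [Fintype.card_subtype, Finset.card_filter, Fintype.sum_prod_type_right]
    simp only [← Finset.card_filter]
    have : ∀ j : Fin m, (Finset.univ.filter fun i => i < j).card = (j : ℕ) := fun j => by
      rw [← Fin.card_Iio j]; congr 1; ext; simp
    simp only [this]
    rw [Fin.sum_univ_eq_sum_range (fun i => i), Finset.sum_range_id, Nat.choose_two_right]
  change cutSpan _ = ⊤ ∧ Module.finrank ℝ ↥(cutSpan _) = _
  refine ⟨htop, ?_⟩
  rw [htop, finrank_top, Module.finrank_fintype_fun_eq_card, hcard]
end

section
/- Let n ∈ ℕ, let E be a set of unordered pairs of distinct elements of {1,…,n}, and let w : E → ℝ satisfy w_e > 0 for all e ∈ E. Let M(w) = max_{S ⊆ {1,…,n}} Σ_{e ∈ E} w_e·(v_S)_e (the max cut value of w), and let d be the dimension of the span in ℝ^E of {v_S : S ⊆ {1,…,n} with Σ_{e∈E} w_e·(v_S)_e = M(w)} (the max cut dimension). Then for every q ≤ d−1 and all subsets Q_1,…,Q_q ⊆ {1,…,n}, there exists w' : E → ℝ with w'_e > 0 for all e ∈ E, Σ_{e∈E} w'_e·(v_{Q_i})_e = Σ_{e∈E}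 w_e·(v_{Q_i})_e for every i ∈ {1,…,q}, and M(w') > M(w). -/
/-- The cut indicator vector `v_S ∈ ℝ^E` for an edge set `E`: the coordinate at
an edge `e ∈ E` is `1` if exactly one endpoint of `e` lies in `S`, else `0`. -/
noncomputable def cutIndE (n : ℕ) (E : Finset (PairIdx n)) (S : Finset (Fin n)) : ↥E → ℝ :=
  fun e => if ((e : PairIdx n).1.1 ∈ S ↔ (e : PairIdx n).1.2 ∈ S) then 0 else 1

/-- The value `Σ_{e ∈ E} w_e (v_S)_e` of the cut `S` under weights `w`. -/
noncomputable def cutValE (n : ℕ) (E : Finset (PairIdx n)) (w : ↥E → ℝ)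
    (S : Finset (Fin n)) : ℝ :=
  ∑ e, w e * cutIndE n E S e

/-- The max cut value `M(w) = max_{S ⊆ {1,…,n}} Σ_{e ∈ E} w_e (v_S)_e`. -/
noncomputable def maxCutValE (n : ℕ) (E : Finset (PairIdx n)) (w : ↥E → ℝ) : ℝ :=
  Finset.univ.sup' Finset.univ_nonempty (cutValE n E w)

/-- Any vector outside the span of a family is separated from it by a vector orthogonal to
the family. -/
lemma exists_orthogonal_pos {ι κ : Type*} [Fintype ι] (u : κ → ι → ℝ) (v : ι → ℝ)
    (hv : v ∉ Submodule.span ℝ (Set.range u)) :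
    ∃ z : ι → ℝ, (∀ i, ∑ e, z e * u i e = 0) ∧ 0 < ∑ e, z e * v e := by
  classical
  obtain ⟨f, hfv, hf⟩ := Submodule.exists_le_ker_of_notMem hv
  have key : ∀ x : ι → ℝ, ∑ e, (f v * f (Pi.single e 1)) * x e = f v * f x := by
    intro x
    conv_rhs => rw [LinearMap.pi_apply_eq_sum_univ f x]
    rw [Finset.mul_sum]
    refine Finset.sum_congr rfl fun e _ => ?_
    have : (Pi.single e 1 : ι → ℝ) = fun j => if e = j then 1 else 0 := by
      funext j
      simp [Pi.single_apply, eq_comm]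
    rw [this, smul_eq_mul]
    ring
  -- The factor `f v` fixes the sign: the pairing with `v` becomes `(f v) ^ 2`.
  refine ⟨fun e => f v * f (Pi.single e 1), fun i => ?_, ?_⟩
  · have : f (u i) = 0 := hf (Submodule.subset_span ⟨i, rfl⟩)
    rw [key, this, mul_zero]
  · rw [key]
    exact mul_self_pos.mpr hfv

lemma exists_pos_perturbation {ι : Type*} [Finite ι] (w z : ι → ℝ) (hw : ∀ e, 0 < w e) :
    ∃ ε : ℝ, 0 < ε ∧ ∀ e, 0 < w e + ε * z e := by
  have h : ∀ᶠ ε in nhds (0 : ℝ), ∀ e, 0 < w e + ε * z e := by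
    rw [Filter.eventually_all]
    intro e
    have hc : Continuous fun ε : ℝ => w e + ε * z e := by fun_prop
    exact hc.continuousAt.eventually_const_lt (by simpa using hw e)
  obtain ⟨ε, hε, hpos⟩ :=
    ((h.filter_mono nhdsWithin_le_nhds).and (self_mem_nhdsWithin (s := Set.Ioi (0 : ℝ)))).exists
  exact ⟨ε, hpos, hε⟩

lemma cutValE_add_mul (n : ℕ) (E : Finset (PairIdx n)) (w z : ↥E → ℝ) (ε : ℝ)
    (S : Finset (Fin n)) :
    cutValE n E (fun e => w e + ε * z e) S
      = cutValE n E w S + ε * ∑ e, z e * cutIndE n E S e := by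
  simp only [cutValE, add_mul, Finset.sum_add_distrib, Finset.mul_sum, mul_assoc]

/-- If `d` is the max cut dimension of the positively weighted graph `(E, w)`,
then for any `q ≤ d - 1` queried cuts `Q_1, …, Q_q` there is a positive weight
function `w'` agreeing with `w` on the value of every queried cut but whose
max cut value is strictly larger. -/
theorem cutDimension_lower_bound (n : ℕ) (E : Finset (PairIdx n)) (w : ↥E → ℝ)
    (hw : ∀ e, 0 < w e) (q : ℕ)
    (hq : q < Module.finrank ℝ
        ↥(Submodule.span ℝ {v : ↥E → ℝ |
            ∃ S : Finset (Fin n), cutValE n E w S = maxCutValE n E w ∧ v = cutIndE n E S}))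
    (Q : Fin q → Finset (Fin n)) :
    ∃ w' : ↥E → ℝ, (∀ e, 0 < w' e) ∧
      (∀ i : Fin q, cutValE n E w' (Q i) = cutValE n E w (Q i)) ∧
      maxCutValE n E w < maxCutValE n E w' := by
  obtain ⟨S, hS, hSQ⟩ : ∃ S : Finset (Fin n), cutValE n E w S = maxCutValE n E w ∧
      cutIndE n E S ∉ Submodule.span ℝ (Set.range fun i => cutIndE n E (Q i)) := by
    by_contra! hcon
    refine absurd hq (not_lt.mpr ?_)
    refine (Submodule.finrank_mono (Submodule.span_le.mpr ?_)).trans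
      ((finrank_range_le_card fun i => cutIndE n E (Q i)).trans_eq (Fintype.card_fin q))
    rintro v ⟨S, hS, rfl⟩
    exact hcon S hS
  obtain ⟨z, hzQ, hzS⟩ := exists_orthogonal_pos _ _ hSQ
  obtain ⟨ε, hε, hpos⟩ := exists_pos_perturbation w z hw
  refine ⟨fun e => w e + ε * z e, hpos, fun i => ?_, ?_⟩
  · rw [cutValE_add_mul, hzQ i, mul_zero, add_zero]
  · calc maxCutValE n E w = cutValE n E w S := hS.symm
      _ < cutValE n E (fun e => w e + ε * z e) S := by
        rw [cutValE_add_mul]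
        exact lt_add_of_pos_right _ (mul_pos hε hzS)
      _ ≤ maxCutValE n E (fun e => w e + ε * z e) :=
        Finset.le_sup' (cutValE n E fun e => w e + ε * z e) (Finset.mem_univ S)
end

section
/- For every ε ∈ (0,1) and every α' with 0 < α' < (1−ε)³/(108(1+ε)) there exists N ∈ ℕ such that for all n ≥ N the following holds: if D is a linear subspace of ℝ^n with dim D ≤ α'·n, then there exists p ∈ {−1,1}^n such that ‖p − v‖₁ > ε·n for every v ∈ D, and |Σ_{i=1}^n p_i| ≤ 2·√(n·ln n). -/
/-!
The proof is a counting argument over the `2 ^ n` sign vectors.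

For a fixed centre `c`, the average of `‖p - c‖₁` over the cube is at least `n`, and an exponential
moment bound shows that at most `2 ^ n * exp (-t² n / 2)` sign vectors satisfy
`‖p - c‖₁ ≤ (1 - t) n` (`card_cube_near_le`). To pass from one centre to all of `D`, choose for each
sign vector `p` that is `ε n`-close to `D` a nearby point `v p ∈ D`. The `ℓ1`-balls in `D` of radius
`δ n` around the `v p` lie in the ball of radius `(1 + ε + δ) n`, and no point of `D` is in more of
them than there are sign vectors within `(ε + δ) n` of it. Comparing volumes in `D`
(`card_le_of_overlap`) bounds the number of close sign vectors by
`((1 + ε + δ) / δ) ^ dim D * 2 ^ n * exp (-(1 - ε - δ)² n / 2)`. With `δ = (1 - ε) / 3` and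
`log (1 + x) ≤ x` this is at most `2 ^ n * exp (-(7 / 36) (1 - ε)² n)`.

The same exponential moment bound shows that at most `2 ^ n * 2 / n²` sign vectors have
`|∑ p i| > 2 √(n log n)`, so for large `n` some sign vector is neither close to `D` nor unbalanced.
-/

open MeasureTheory Metric in
/-- Volume comparison: if finitely many balls of radius `r` have centres in the ball of radius `R`
and no point lies in more than `M` of them, then there are at most `((R + r) / r) ^ dim E * M` of
them. -/
lemma card_le_of_overlap {ι E : Type*} [NormedAddCommGroup E] [NormedSpace ℝ E]
    [FiniteDimensional ℝ E] (S : Finset ι) (v : ι → E) (R r : ℝ) (hR : 0 ≤ R) (hr : 0 < r) (M : ℕ)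
    (hv : ∀ i ∈ S, ‖v i‖ ≤ R)
    (hM : ∀ x : E, ∀ T ⊆ S, (∀ i ∈ T, ‖x - v i‖ ≤ r) → T.card ≤ M) :
    (S.card : ℝ) ≤ ((R + r) / r) ^ Module.finrank ℝ E * M := by
  classical
  let _ : MeasurableSpace E := borel E
  have : BorelSpace E := ⟨rfl⟩
  let μ : Measure E := Measure.addHaar
  have hpt : ∀ x : E, ∑ i ∈ S, (closedBall (v i) r).indicator (fun _ => (1 : ENNReal)) x
      ≤ (closedBall (0 : E) (R + r)).indicator (fun _ => (M : ENNReal)) x := by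
    intro x
    have h1 : ∑ i ∈ S, (closedBall (v i) r).indicator (fun _ => (1 : ENNReal)) x
        = ((S.filter fun i => ‖x - v i‖ ≤ r).card : ENNReal) := by
      simp [Set.indicator_apply, dist_eq_norm, Finset.sum_boole]
    rw [h1]
    by_cases hx : x ∈ closedBall (0 : E) (R + r)
    · rw [Set.indicator_of_mem hx]
      exact_mod_cast hM x _ (Finset.filter_subset _ _) (by simp)
    · rw [Set.indicator_of_notMem hx]
      have : (S.filter fun i => ‖x - v i‖ ≤ r) = ∅ := by
        refine Finset.filter_eq_empty_iff.2 fun i hi hle => hx ?_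
        have h2 := norm_add_le (x - v i) (v i)
        have h3 := hv i hi
        rw [sub_add_cancel] at h2
        rw [mem_closedBall_zero_iff]
        linarith
      simp [this]
  have hvol := lintegral_mono (μ := μ) hpt
  rw [lintegral_finsetSum _ (fun i _ => measurable_const.indicator measurableSet_closedBall),
    lintegral_indicator_const measurableSet_closedBall] at hvol
  simp only [lintegral_indicator_const measurableSet_closedBall, one_mul] at hvol
  simp only [Measure.addHaar_closedBall' μ _ hr.le,
    Measure.addHaar_closedBall' μ _ (add_nonneg hR hr.le), Finset.sum_const, nsmul_eq_mul] at hvol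
  have hc0 : μ (closedBall (0 : E) 1) ≠ 0 := (measure_closedBall_pos μ _ one_pos).ne'
  have hct : μ (closedBall (0 : E) 1) ≠ ⊤ := measure_closedBall_lt_top.ne
  rw [← mul_assoc, ← mul_assoc, ENNReal.mul_le_mul_iff_left hc0 hct] at hvol
  have hreal := ENNReal.toReal_mono (by finiteness) hvol
  rw [ENNReal.toReal_mul, ENNReal.toReal_mul, ENNReal.toReal_ofReal (by positivity),
    ENNReal.toReal_ofReal (by positivity), ENNReal.toReal_natCast, ENNReal.toReal_natCast] at hreal
  rw [div_pow, div_mul_eq_mul_div, le_div_iff₀ (by positivity)]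
  linarith

/-- The sign vectors `{-1, 1}ⁿ`, as a finite set of real vectors. -/
noncomputable def cube (n : ℕ) : Finset (Fin n → ℝ) :=
  Fintype.piFinset fun _ => ({1, -1} : Finset ℝ)

lemma mem_cube {n : ℕ} {p : Fin n → ℝ} : p ∈ cube n ↔ ∀ i, p i = 1 ∨ p i = -1 := by
  simp [cube]

lemma card_cube (n : ℕ) : (cube n).card = 2 ^ n := by
  have : ({1, -1} : Finset ℝ).card = 2 := Finset.card_pair (by norm_num)
  simp [cube, this]

/-- Chernoff's bound on the cube: coordinatewise bounds on the exponential moments of the `f i`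
control how many sign vectors make `∑ i, f i (p i)` large. -/
lemma card_chernoff {n : ℕ} (f : Fin n → ℝ → ℝ) (s a : ℝ)
    (h : ∀ i, Real.exp (f i 1) + Real.exp (f i (-1)) ≤ 2 * Real.exp a)
    (T : Finset (Fin n → ℝ)) (hT : T ⊆ cube n) (hs : ∀ p ∈ T, s ≤ ∑ i, f i (p i)) :
    (T.card : ℝ) ≤ 2 ^ n * Real.exp (n * a - s) := by
  have h1 : (T.card : ℝ) * Real.exp s ≤ ∑ p ∈ cube n, ∏ i, Real.exp (f i (p i)) := by
    rw [← nsmul_eq_mul]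
    refine (Finset.card_nsmul_le_sum T (fun p => ∏ i, Real.exp (f i (p i))) _ fun p hp => ?_).trans
      (Finset.sum_le_sum_of_subset_of_nonneg hT fun p _ _ =>
        Finset.prod_nonneg fun i _ => (Real.exp_pos _).le)
    rw [← Real.exp_sum]
    exact Real.exp_le_exp.2 (hs p hp)
  have h2 : ∑ p ∈ cube n, ∏ i, Real.exp (f i (p i)) ≤ (2 * Real.exp a) ^ n := by
    rw [cube, ← Finset.prod_univ_sum (fun _ => ({1, -1} : Finset ℝ)) fun i x => Real.exp (f i x)]
    refine (Finset.prod_le_prod (fun i _ => Finset.sum_nonneg fun x _ => (Real.exp_pos _).le)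
      (g := fun _ => 2 * Real.exp a) fun i _ => ?_).trans (by simp)
    rw [Finset.sum_pair (by norm_num)]
    exact h i
  rw [Real.exp_sub, ← mul_div_assoc, le_div_iff₀ (Real.exp_pos s), Real.exp_nat_mul, ← mul_pow]
  exact h1.trans h2

lemma exp_add_exp_neg_le (l : ℝ) :
    Real.exp l + Real.exp (-l) ≤ 2 * Real.exp (l ^ 2 / 2) := by
  have := Real.cosh_le_exp_half_sq l
  rw [Real.cosh_eq] at this
  linarith

/-- The distances `x`, `y` from `c` to `1` and `-1` have mean at least `1` and differ by at most
`2`, so `-l * x`, `-l * y` have the exponential moment of a random sign scaled by `l`, shifted by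
`-l`. -/
lemma exp_abs_le (l c : ℝ) (hl : 0 ≤ l) :
    Real.exp (-l * |1 - c|) + Real.exp (-l * |-1 - c|) ≤ 2 * Real.exp (l ^ 2 / 2 - l) := by
  set x := |1 - c| with hx
  set y := |-1 - c| with hy
  have h1 : 2 ≤ x + y := by
    have := abs_sub (1 - c) (-1 - c)
    have h2 : (1 - c) - (-1 - c) = 2 := by ring
    rw [h2, abs_two] at this
    exact this
  have h2 : |y - x| ≤ 2 := by
    have := abs_abs_sub_abs_le (-1 - c) (1 - c)
    have h2 : (-1 - c) - (1 - c) = -2 := by ring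
    rw [h2, abs_neg, abs_two] at this
    exact this
  have h3 : Real.exp (-l * x) + Real.exp (-l * y)
      = Real.exp (-l * ((x + y) / 2)) *
        (Real.exp (l * ((y - x) / 2)) + Real.exp (-(l * ((y - x) / 2)))) := by
    rw [mul_add, ← Real.exp_add, ← Real.exp_add]
    congr 2 <;> ring
  have h4 : (l * ((y - x) / 2)) ^ 2 ≤ l ^ 2 := by
    have : (y - x) ^ 2 ≤ 2 ^ 2 := by rw [← sq_abs]; gcongr
    nlinarith [sq_nonneg l]
  rw [h3]
  calc _ ≤ Real.exp (-l) * (2 * Real.exp (l ^ 2 / 2)) := by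
        refine mul_le_mul (Real.exp_le_exp.2 (by nlinarith)) ?_ (by positivity) (by positivity)
        refine (exp_add_exp_neg_le _).trans ?_
        gcongr
    _ = _ := by
        rw [sub_eq_add_neg, Real.exp_add]; ring

lemma card_cube_near_le {n : ℕ} (c : Fin n → ℝ) (t : ℝ) (ht : 0 ≤ t)
    (T : Finset (Fin n → ℝ)) (hT : T ⊆ cube n) (h : ∀ p ∈ T, ∑ i, |p i - c i| ≤ (1 - t) * n) :
    (T.card : ℝ) ≤ 2 ^ n * Real.exp (-(t ^ 2 / 2) * n) := by
  have := card_chernoff (fun i x => -t * |x - c i|) (-t * ((1 - t) * n)) (t ^ 2 / 2 - t)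
    (fun i => exp_abs_le t (c i) ht) T hT (fun p hp => by
      rw [← Finset.mul_sum]
      nlinarith [h p hp])
  refine this.trans (le_of_eq ?_)
  congr 2
  ring

lemma card_cube_unbalanced_le {n : ℕ} (hn : 0 < n) (σ : ℝ) (hσ : σ ^ 2 = 1)
    (T : Finset (Fin n → ℝ)) (hT : T ⊆ cube n)
    (h : ∀ p ∈ T, 2 * Real.sqrt (n * Real.log n) ≤ σ * ∑ i, p i) :
    (T.card : ℝ) ≤ 2 ^ n * (1 / (n : ℝ) ^ 2) := by
  have hn' : (0 : ℝ) < n := by exact_mod_cast hn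
  have hlog : 0 ≤ Real.log n := Real.log_natCast_nonneg n
  set q := Real.sqrt (n * Real.log n) with hq
  have hq2 : q ^ 2 = n * Real.log n := Real.sq_sqrt (by positivity)
  -- The exponent `l * (2 q) - n l² / 2` is maximal at `l = 2 q / n`, where it equals `2 log n`.
  set l := 2 * q / n with hl
  have hl0 : 0 ≤ l := by positivity
  have := card_chernoff (fun _ x => l * σ * x) (l * (2 * q)) (l ^ 2 / 2)
    (fun i => by
      have := exp_add_exp_neg_le (l * σ)
      rw [mul_pow, hσ, mul_one] at this
      simpa using this) T hT (fun p hp => by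
      rw [← Finset.mul_sum, mul_assoc]
      exact mul_le_mul_of_nonneg_left (h p hp) hl0)
  refine this.trans (le_of_eq ?_)
  have h5 : n * (l ^ 2 / 2) - l * (2 * q) = -((2 : ℕ) * Real.log n) := by
    have : n * (l ^ 2 / 2) - l * (2 * q) = -(2 * q ^ 2 / n) := by
      rw [hl]; field_simp; ring
    rw [this, hq2]
    push_cast
    field_simp
  rw [h5, Real.exp_neg, Real.exp_nat_mul, Real.exp_log hn', one_div]

/-- The number of sign vectors within `ℓ1`-distance `ε n` of `D`, for an arbitrary choice of the
slack `δ` by which the neighbourhoods are thickened. -/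
lemma card_cube_near_subspace_le {n : ℕ} (hn : 0 < n) (D : Submodule ℝ (Fin n → ℝ)) (ε δ : ℝ)
    (hε : 0 ≤ ε) (hδ : 0 < δ) (hεδ : ε + δ ≤ 1) (T : Finset (Fin n → ℝ)) (hT : T ⊆ cube n)
    (h : ∀ p ∈ T, ∃ v ∈ D, ∑ i, |p i - v i| ≤ ε * n) :
    (T.card : ℝ) ≤ ((1 + ε + δ) / δ) ^ Module.finrank ℝ D *
      (2 ^ n * Real.exp (-((1 - ε - δ) ^ 2 / 2) * n)) := by
  have hn' : (0 : ℝ) < n := by exact_mod_cast hn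
  -- `D` with the `ℓ1` norm
  let e := (WithLp.linearEquiv 1 ℝ (Fin n → ℝ)).symm
  let D' : Submodule ℝ (PiLp 1 fun _ : Fin n => ℝ) := D.map e.toLinearMap
  have hfin : Module.finrank ℝ D' = Module.finrank ℝ D := LinearEquiv.finrank_map_eq e D
  have hex : ∀ p : Fin n → ℝ, ∃ v : D', p ∈ T → ∑ i, |p i - v.1 i| ≤ ε * n := by
    intro p
    by_cases hp : p ∈ T
    · obtain ⟨v, hv, hle⟩ := h p hp
      exact ⟨⟨e v, Submodule.mem_map_of_mem hv⟩, fun _ => hle⟩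
    · exact ⟨0, fun hp' => absurd hp' hp⟩
  choose v hv using hex
  have hnorm : ∀ w : D', ‖w‖ = ∑ i, |w.1 i| := fun w => by
    rw [Submodule.coe_norm, PiLp.norm_eq_of_L1]; rfl
  have hmain := card_le_of_overlap T v ((1 + ε) * n) (δ * n) (by positivity) (by positivity)
    ⌊(2 : ℝ) ^ n * Real.exp (-((1 - ε - δ) ^ 2 / 2) * n)⌋₊ ?_ ?_
  · rw [hfin] at hmain
    have hratio : ((1 + ε) * n + δ * n) / (δ * n) = (1 + ε + δ) / δ := by
      field_simp
    rw [hratio] at hmain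
    refine hmain.trans ?_
    gcongr
    exact Nat.floor_le (by positivity)
  · intro p hp
    rw [hnorm]
    have h1 : ∑ i, |(v p).1 i| ≤ ∑ i, (1 + |p i - (v p).1 i|) := by
      refine Finset.sum_le_sum fun i _ => ?_
      have h2 : |p i| = 1 := by
        rcases mem_cube.1 (hT hp) i with h | h <;> simp [h]
      have h3 := abs_sub_abs_le_abs_sub ((v p).1 i) (p i)
      rw [abs_sub_comm] at h3
      linarith
    rw [Finset.sum_add_distrib] at h1
    have h2 := hv p hp
    simp at h1
    linarith
  · intro x U hU hx
    refine Nat.le_floor ?_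
    refine card_cube_near_le (fun i => x.1 i) (1 - ε - δ) (by linarith) U (hU.trans hT) ?_
    intro p hp
    have h1 := hx p hp
    rw [hnorm] at h1
    have h2 := hv p (hU hp)
    have h3 : ∑ i, |p i - x.1 i| ≤ ∑ i, (|p i - (v p).1 i| + |(x - v p).1 i|) := by
      refine Finset.sum_le_sum fun i _ => ?_
      have h4 := abs_sub_le (p i) ((v p).1 i) (x.1 i)
      rw [abs_sub_comm ((v p).1 i)] at h4
      exact h4
    rw [Finset.sum_add_distrib] at h3
    linarith


/-- The hypercube cannot be covered by an ℓ1-neighborhood of a low-dimensional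
subspace: for `ε ∈ (0,1)` and `0 < α' < (1-ε)³/(108(1+ε))`, for all
sufficiently large `n`, any subspace `D ⊆ ℝⁿ` of dimension at most `α'·n`
misses some sign vector `p ∈ {-1,1}ⁿ` by ℓ1-distance more than `ε·n`, where
moreover `|Σᵢ pᵢ| ≤ 2√(n ln n)`. -/
theorem hypercube_not_covered (ε α' : ℝ) (hε : ε ∈ Set.Ioo (0 : ℝ) 1)
    (hα0 : 0 < α') (hα : α' < (1 - ε) ^ 3 / (108 * (1 + ε))) :
    ∃ N : ℕ, ∀ n : ℕ, N ≤ n → ∀ D : Submodule ℝ (Fin n → ℝ),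
      (Module.finrank ℝ ↥D : ℝ) ≤ α' * n →
      ∃ p : Fin n → ℝ, (∀ i, p i = 1 ∨ p i = -1) ∧
        (∀ v ∈ D, ε * n < ∑ i, |p i - v i|) ∧
        |∑ i, p i| ≤ 2 * Real.sqrt (n * Real.log n) := by
  classical
  obtain ⟨hε0, hε1⟩ := hε
  set η := 1 - ε with hη
  have hη0 : 0 < η := by linarith
  obtain ⟨N, hN⟩ := exists_nat_gt (36 / (7 * η ^ 2))
  refine ⟨max N 2, fun n hn D hD => ?_⟩
  have hn2 : 2 ≤ n := (le_max_right _ _).trans hn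
  have hnN : N ≤ n := (le_max_left _ _).trans hn
  have hnR : (2 : ℝ) ≤ n := by exact_mod_cast hn2
  by_contra! hcon
  -- The sign vectors close to `D`, and the two kinds of unbalanced ones, exhaust the cube.
  let A := (cube n).filter fun p => ∃ v ∈ D, ∑ i, |p i - v i| ≤ ε * n
  let B := fun σ : ℝ => (cube n).filter fun p => 2 * Real.sqrt (n * Real.log n) ≤ σ * ∑ i, p i
  have hcover : cube n ⊆ A ∪ (B 1 ∪ B (-1)) := by
    intro p hp
    by_cases hA : ∃ v ∈ D, ∑ i, |p i - v i| ≤ ε * n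
    · exact Finset.mem_union_left _ (Finset.mem_filter.2 ⟨hp, hA⟩)
    · refine Finset.mem_union_right _ ?_
      push Not at hA
      have := hcon p (mem_cube.1 hp) hA
      rcases lt_abs.1 this with h | h
      · exact Finset.mem_union_left _ (Finset.mem_filter.2 ⟨hp, by linarith⟩)
      · exact Finset.mem_union_right _ (Finset.mem_filter.2 ⟨hp, by linarith⟩)
  have hcard : (2 : ℝ) ^ n ≤ A.card + ((B 1).card + (B (-1)).card) := by
    have h1 := Finset.card_le_card hcover
    have h2 := Finset.card_union_le A (B 1 ∪ B (-1))
    have h3 := Finset.card_union_le (B 1) (B (-1))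
    rw [card_cube] at h1
    have h4 : 2 ^ n ≤ A.card + ((B 1).card + (B (-1)).card) :=
      h1.trans (h2.trans (Nat.add_le_add_left h3 _))
    have h5 : ((2 ^ n : ℕ) : ℝ) ≤ ((A.card + ((B 1).card + (B (-1)).card) : ℕ) : ℝ) :=
      Nat.cast_le.2 h4
    simpa only [Nat.cast_pow, Nat.cast_add, Nat.cast_ofNat] using h5
  have hB : ∀ σ : ℝ, σ ^ 2 = 1 → ((B σ).card : ℝ) ≤ 2 ^ n * (1 / 4) := by
    intro σ hσ
    refine (card_cube_unbalanced_le (by omega) σ hσ (B σ) (Finset.filter_subset _ _)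
      fun p hp => (Finset.mem_filter.1 hp).2).trans ?_
    have : (4 : ℝ) ≤ n ^ 2 := by nlinarith
    gcongr
  have hA : (A.card : ℝ) < 2 ^ n * (1 / 2) := by
    have h1 := card_cube_near_subspace_le (by omega) D ε (η / 3) hε0.le (by positivity)
      (by linarith) A (Finset.filter_subset _ _) fun p hp => (Finset.mem_filter.1 hp).2
    have h2 : ((1 + ε + η / 3) / (η / 3)) ^ Module.finrank ℝ D ≤ Real.exp (η ^ 2 / 36 * n) := by
      have h3 : (1 + ε + η / 3) / (η / 3) = 3 * (1 + ε) / η + 1 := by field_simp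
      calc _ ≤ Real.exp (3 * (1 + ε) / η) ^ Module.finrank ℝ D := by
            rw [h3]
            exact pow_le_pow_left₀ (by positivity) (Real.add_one_le_exp _) _
        _ = Real.exp (Module.finrank ℝ D * (3 * (1 + ε) / η)) := (Real.exp_nat_mul _ _).symm
        _ ≤ _ := by
            refine Real.exp_le_exp.2 ?_
            calc _ ≤ (η ^ 3 / (108 * (1 + ε)) * n) * (3 * (1 + ε) / η) := by
                  gcongr
                  exact hD.trans (by gcongr)
              _ = _ := by field_simp; norm_num
    have h4 : (1 - ε - η / 3) ^ 2 / 2 = 8 * η ^ 2 / 36 := by rw [← hη]; ring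
    have h5 : 1 < 7 * η ^ 2 / 36 * n := by
      have : 36 / (7 * η ^ 2) < n := hN.trans_le (by exact_mod_cast hnN)
      rw [div_lt_iff₀ (by positivity)] at this
      linarith
    have h6 : Real.exp (η ^ 2 / 36 * n) * Real.exp (-(8 * η ^ 2 / 36) * n) < 1 / 2 := by
      rw [← Real.exp_add]
      calc _ ≤ Real.exp (-1) := Real.exp_le_exp.2 (by linarith)
        _ < 1 / 2 := by
          rw [Real.exp_neg, inv_eq_one_div]
          have := Real.exp_one_gt_d9
          exact one_div_lt_one_div_of_lt (by norm_num) (by linarith)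
    rw [h4] at h1
    calc (A.card : ℝ) ≤ _ := h1
      _ ≤ Real.exp (η ^ 2 / 36 * n) * (2 ^ n * Real.exp (-(8 * η ^ 2 / 36) * n)) := by gcongr
      _ = 2 ^ n * (Real.exp (η ^ 2 / 36 * n) * Real.exp (-(8 * η ^ 2 / 36) * n)) := by ring
      _ < _ := by gcongr
  have h1 := hB 1 (by norm_num)
  have h2 := hB (-1) (by norm_num)
  linarith
end

section
/- Let n ≥ 1, let t ∈ [0,1), and let x ∈ ℝ^n. Then the number of p ∈ {−1,1}^n with ‖p − x‖₁ ≤ t·n is at most 2^n · exp(−n·(1−t)²/2). -/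
/-!
Chernoff's method. With `s = 1 - t ≥ 0`, every sign vector `p` with `∑ |p i - x i| ≤ t n` has
`1 ≤ exp (s t n) ∏ exp (-s |p i - x i|)`. Summing over all sign vectors, the sum of products
factors over the coordinates, and each factor
`exp (-s |1 - y|) + exp (-s |-1 - y|)` is at most `2 exp (-s) cosh s ≤ 2 exp (-s + s² / 2)`
(`coord_factor_le`). The resulting exponent is `n (s t - s + s² / 2) = -n s² / 2`.
-/

/-- The coordinate factor, as a function of `y`, is largest for `|y| = 1`. With `a = |1 - y|` and
`b = |-1 - y|` it equals `2 exp (-s (a + b) / 2) cosh (s (a - b) / 2)`,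
while `a + b ≥ 2` and `|a - b| ≤ 2`. -/
lemma coord_factor_le (s : ℝ) (hs : 0 ≤ s) (y : ℝ) :
    Real.exp (-(s * |1 - y|)) + Real.exp (-(s * |-1 - y|))
      ≤ 2 * Real.exp (-s + s ^ 2 / 2) := by
  set a := |1 - y| with ha
  set b := |-1 - y| with hb
  have hsum : 2 ≤ a + b := by
    linarith [le_abs_self (1 - y), neg_le_abs (-1 - y)]
  have hdiff : |a - b| ≤ 2 := by
    have h := abs_abs_sub_abs_le_abs_sub (1 - y) (-1 - y)
    rw [show (1 - y) - (-1 - y) = 2 by ring, abs_two] at h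
    exact h
  have hfactor : Real.exp (-(s * a)) + Real.exp (-(s * b))
      = 2 * (Real.exp (-(s * ((a + b) / 2))) * Real.cosh (s * ((a - b) / 2))) := by
    rw [Real.cosh_eq, mul_div_assoc', mul_add, ← Real.exp_add, ← Real.exp_add,
      show -(s * ((a + b) / 2)) + s * ((a - b) / 2) = -(s * b) by ring,
      show -(s * ((a + b) / 2)) + -(s * ((a - b) / 2)) = -(s * a) by ring]
    ring
  have hcosh : Real.cosh (s * ((a - b) / 2)) ≤ Real.exp (s ^ 2 / 2) := by
    refine le_trans (Real.cosh_le_cosh.mpr ?_) (Real.cosh_le_exp_half_sq s)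
    rw [abs_mul, abs_div, abs_two, abs_of_nonneg hs]
    nlinarith
  rw [hfactor, Real.exp_add]
  gcongr
  nlinarith

/-- For `t ∈ [0,1)` and any `x ∈ ℝⁿ` (`n ≥ 1`), the number of sign vectors
`p ∈ {-1,1}ⁿ` with `‖p - x‖₁ ≤ t·n` is at most `2ⁿ · exp(-n(1-t)²/2)`. -/
theorem sign_vectors_near_point (n : ℕ) (hn : 1 ≤ n) (t : ℝ) (ht0 : 0 ≤ t)
    (ht1 : t < 1) (x : Fin n → ℝ) :
    (Nat.card {p : Fin n → ℝ |
        (∀ i, p i = 1 ∨ p i = -1) ∧ ∑ i, |p i - x i| ≤ t * n} : ℝ)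
      ≤ 2 ^ n * Real.exp (-(n * (1 - t) ^ 2 / 2)) := by
  classical
  set s : ℝ := 1 - t with hs
  have hs0 : 0 ≤ s := by linarith
  let P : Finset (Fin n → ℝ) := Fintype.piFinset fun _ => {1, -1}
  have hset : {p : Fin n → ℝ | (∀ i, p i = 1 ∨ p i = -1) ∧ ∑ i, |p i - x i| ≤ t * n}
      = ((P.filter fun p => ∑ i, |p i - x i| ≤ t * n : Finset (Fin n → ℝ)) :
          Set (Fin n → ℝ)) := by
    ext p
    simp [P, Fintype.mem_piFinset]
  rw [hset, Nat.card_coe_set_eq, Set.ncard_coe_finset, Finset.card_eq_sum_ones, Nat.cast_sum]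
  calc ∑ p ∈ P with ∑ i, |p i - x i| ≤ t * n, ((1 : ℕ) : ℝ)
      ≤ ∑ p ∈ P with ∑ i, |p i - x i| ≤ t * n,
          Real.exp (s * (t * n)) * ∏ i, Real.exp (-(s * |p i - x i|)) := by
        refine Finset.sum_le_sum fun p hp => ?_
        have hp' := (Finset.mem_filter.mp hp).2
        rw [← Real.exp_sum, ← Real.exp_add, Nat.cast_one, Finset.sum_neg_distrib,
          ← Finset.mul_sum]
        apply Real.one_le_exp
        linarith [mul_le_mul_of_nonneg_left hp' hs0]
    _ ≤ ∑ p ∈ P, Real.exp (s * (t * n)) * ∏ i, Real.exp (-(s * |p i - x i|)) :=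
        Finset.sum_le_sum_of_subset_of_nonneg (Finset.filter_subset _ _)
          fun p _ _ => by positivity
    _ = Real.exp (s * (t * n)) *
          ∏ i, (Real.exp (-(s * |1 - x i|)) + Real.exp (-(s * |-1 - x i|))) := by
        rw [← Finset.mul_sum,
          ← Finset.prod_univ_sum (fun _ => ({1, -1} : Finset ℝ))
            (fun i y => Real.exp (-(s * |y - x i|)))]
        congr 1
        refine Finset.prod_congr rfl fun i _ => ?_
        rw [Finset.sum_pair (by norm_num)]
    _ ≤ Real.exp (s * (t * n)) * ∏ _i : Fin n, (2 * Real.exp (-s + s ^ 2 / 2)) := by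
        gcongr with i
        exact coord_factor_le s hs0 (x i)
    _ = 2 ^ n * Real.exp (-(n * s ^ 2 / 2)) := by
        rw [Finset.prod_const, Finset.card_univ, Fintype.card_fin, mul_pow, ← Real.exp_nat_mul,
          mul_left_comm, ← Real.exp_add]
        congr 2
        rw [hs]
        ring
end

section
/- Let n ∈ ℕ, ε > 0, q ∈ ℕ, and let Q_1,…,Q_q ⊆ {1,…,n} and C ⊆ {1,…,n}. For S ⊆ {1,…,n} set M_S = (1·1^T − u_S·u_S^T)/2 ∈ ℝ^{n×n}. Suppose y ∈ ℝ^n satisfies y·u_{Q_j} = 0 for all j ∈ {1,…,q}, y·1 = 0, −1 ≤ y_i ≤ 1 for all i, and y·u_C ≥ ε·n. Then the matrix Z = −y·y^T ∈ ℝ^{n×n} satisfies: Z_{ij} ≥ −1 for all i,j; ⟨Z, M_{Q_j}⟩ = 0 for all j ∈ {1,…,q}; and ⟨Z, M_C⟩ ≥ ε²·n²/2. -/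
/-!
For a vector `u`, expanding the products gives
`⟨-y yᵀ, (1 1ᵀ - u uᵀ)/2⟩ = ((y · u)² - (y · 1)²) / 2` (`sum_sum_neg_mul_eq`).
Since `y · 1 = 0`, the inner product with `M_S` is `(y · u_S)² / 2`, which vanishes when
`y ⊥ u_S` and is at least `(ε n)² / 2` when `y · u_S ≥ ε n ≥ 0`. The entrywise bound holds because
`|y i * y j| ≤ 1`.
-/

/-- The signed indicator vector `u_S ∈ ℝⁿ`: `(u_S)ᵢ = 1` if `i ∈ S` and `-1`
otherwise. -/
noncomputable def signVec (n : ℕ) (S : Finset (Fin n)) : Fin n → ℝ :=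
  fun i => if i ∈ S then 1 else -1

theorem sum_sum_neg_mul_eq {n : ℕ} (y u : Fin n → ℝ) :
    ∑ i, ∑ j, (-(y i * y j)) * ((1 - u i * u j) / 2) =
      ((∑ i, y i * u i) ^ 2 - (∑ i, y i) ^ 2) / 2 := by
  rw [sq, sq, Finset.sum_mul_sum, Finset.sum_mul_sum, ← Finset.sum_sub_distrib, Finset.sum_div]
  refine Finset.sum_congr rfl fun i _ => ?_
  rw [← Finset.sum_sub_distrib, Finset.sum_div]
  exact Finset.sum_congr rfl fun j _ => by ring

/-- If `y ∈ ℝⁿ` is feasible for LP2 (orthogonal to every `u_{Qⱼ}` and to `1`,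
with entries in `[-1,1]`) and `y · u_C ≥ ε·n`, then `Z = -y·yᵀ` has all entries
`≥ -1`, is orthogonal to every `M_{Qⱼ} = (11ᵀ - u_{Qⱼ}u_{Qⱼ}ᵀ)/2` in the matrix
inner product, and satisfies `⟨Z, M_C⟩ ≥ ε²n²/2`. -/
theorem lp2_to_matrix_lp (n : ℕ) (ε : ℝ) (hε : 0 < ε) (q : ℕ)
    (Q : Fin q → Finset (Fin n)) (C : Finset (Fin n)) (y : Fin n → ℝ)
    (hyQ : ∀ j : Fin q, ∑ i, y i * signVec n (Q j) i = 0)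
    (hy1 : ∑ i, y i = 0)
    (hybd : ∀ i, -1 ≤ y i ∧ y i ≤ 1)
    (hyC : ε * n ≤ ∑ i, y i * signVec n C i) :
    (∀ i j : Fin n, -1 ≤ -(y i * y j)) ∧
    (∀ k : Fin q, ∑ i, ∑ j,
        (-(y i * y j)) * ((1 - signVec n (Q k) i * signVec n (Q k) j) / 2) = 0) ∧
    ε ^ 2 * n ^ 2 / 2 ≤ ∑ i, ∑ j,
        (-(y i * y j)) * ((1 - signVec n C i * signVec n C j) / 2) := by
  refine ⟨fun i j => ?_, fun k => ?_, ?_⟩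
  · have h : |y i * y j| ≤ 1 := by
      rw [abs_mul]
      exact mul_le_one₀ (abs_le.2 (hybd i)) (abs_nonneg _) (abs_le.2 (hybd j))
    linarith [(abs_le.1 h).2]
  · rw [sum_sum_neg_mul_eq, hyQ k, hy1]
    norm_num
  · rw [sum_sum_neg_mul_eq, hy1]
    -- Squaring the bound on `y · u_C` is monotone because `ε * n` is nonnegative.
    have h : (ε * n) ^ 2 ≤ (∑ i, y i * signVec n C i) ^ 2 :=
      pow_le_pow_left₀ (by positivity) hyC 2
    rw [mul_pow] at h
    linarith
end

section
/- For every ε ∈ (0,1) and every α with 0 < α < (1−ε)³/(108(1+ε)) there exists N ∈ ℕ such that for all n ≥ N, all q ≤ α·n, and all subsets Q_1,…,Q_q ⊆ {1,…,n}, there exist a subset C ⊆ {1,…,n} with n/2 − √(n·ln n) ≤ |C| ≤ n/2 + √(n·ln n) and a vector z ∈ ℝ^{C(n,2)} with every entry ≥ −1, such that z·v_{Q_j} = 0 for all j ∈ {1,…,q} and z·v_C ≥ ε²·n²/4. -/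
/-- The value of the rank-one perturbation `-w wᵀ` on a cut, when `w` has total sum zero. -/
lemma sum_neg_mul_cutVec {n : ℕ} (w : Fin n → ℝ) (hw : ∑ i, w i = 0) (S : Finset (Fin n)) :
    ∑ e : PairIdx n, -(w e.1.1 * w e.1.2) * cutVec n S e = (∑ i ∈ S, w i) ^ 2 := by
  set f : Fin n × Fin n → ℝ :=
    fun p => -(w p.1 * w p.2) * (if (p.1 ∈ S ↔ p.2 ∈ S) then 0 else 1) with hf
  have h1 : ∑ e : PairIdx n, -(w e.1.1 * w e.1.2) * cutVec n S e
      = ∑ p : Fin n × Fin n, if p.1 < p.2 then f p else 0 := by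
    rw [← Finset.sum_filter]
    exact (Finset.sum_subtype (p := fun p : Fin n × Fin n => p.1 < p.2) _ (by simp) f).symm
  have hswap : (∑ p : Fin n × Fin n, if p.1 < p.2 then f p else 0)
      = ∑ p : Fin n × Fin n, if p.2 < p.1 then f p else 0 := by
    refine Fintype.sum_equiv (Equiv.prodComm _ _) _ _ ?_
    rintro ⟨i, j⟩
    simp only [hf, Equiv.prodComm_apply, Prod.swap_prod_mk, mul_comm (w i), iff_comm]
  have hadd : (∑ p : Fin n × Fin n, if p.1 < p.2 then f p else 0)
      + (∑ p : Fin n × Fin n, if p.2 < p.1 then f p else 0) = ∑ p, f p := by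
    rw [← Finset.sum_add_distrib]
    refine Finset.sum_congr rfl ?_
    rintro ⟨i, j⟩ -
    rcases lt_trichotomy i j with h | h | h
    · simp [h, h.not_gt]
    · subst h; simp [hf]
    · simp [h, h.not_gt]
  have hall : ∑ p, f p = 2 * (∑ i ∈ S, w i) ^ 2 := by
    -- with `s` the 0/1 indicator of `S`, "exactly one of `i, j` in `S`" has indicator
    -- `s i + s j - 2 * s i * s j`; below, `a i = s i * w i`
    set a : Fin n → ℝ := fun i => if i ∈ S then w i else 0 with ha
    have hS : ∑ i ∈ S, w i = ∑ i, a i := by simp [ha]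
    have hp : ∀ p : Fin n × Fin n,
        f p = 2 * (a p.1 * a p.2) - a p.1 * w p.2 - w p.1 * a p.2 := by
      rintro ⟨i, j⟩
      by_cases hi : i ∈ S <;> by_cases hj : j ∈ S <;> simp [hf, ha, hi, hj]
      ring
    simp_rw [hp, Finset.sum_sub_distrib, ← Finset.mul_sum, Fintype.sum_prod_type,
      ← Finset.mul_sum, ← Finset.sum_mul, hw, hS]
    ring
  linarith

/-- A kernel of `m` linear conditions meets the cube `[-1,1]^n` in a point having at most `m`
coordinates different from `±1`. -/
lemma exists_extreme {n m : ℕ} (L : (Fin n → ℝ) →ₗ[ℝ] (Fin m → ℝ)) :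
    ∃ w : Fin n → ℝ, L w = 0 ∧ (∀ i, |w i| ≤ 1) ∧
      (Finset.univ.filter fun i => |w i| < 1).card ≤ m := by
  set K : Set (Fin n → ℝ) := Set.Icc (-1) 1 ∩ {w | L w = 0} with hK
  have hKmem : ∀ w, w ∈ K ↔ (∀ i, |w i| ≤ 1) ∧ L w = 0 := by
    intro w
    simp [hK, Pi.le_def, abs_le, forall_and]
  have hcl : IsClosed {w : Fin n → ℝ | L w = 0} :=
    isClosed_eq (LinearMap.continuous_of_finiteDimensional L) continuous_const
  have hcomp : IsCompact K := isCompact_Icc.inter_right hcl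
  have hne : K.Nonempty := ⟨0, by rw [hKmem]; simp⟩
  obtain ⟨w, hwK, hext⟩ := hcomp.extremePoints_nonempty hne
  obtain ⟨hw1, hwL⟩ := (hKmem w).1 hwK
  refine ⟨w, hwL, hw1, ?_⟩
  by_contra! hcard
  set F := Finset.univ.filter fun i => |w i| < 1 with hF
  -- extension by zero from `F`
  let E : (F → ℝ) →ₗ[ℝ] (Fin n → ℝ) := Function.ExtendByZero.linearMap ℝ (Subtype.val)
  have hEval : ∀ (x : F → ℝ) (i : F), E x i = x i := fun x i =>
    Subtype.val_injective.extend_apply x 0 i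
  have hEout : ∀ (x : F → ℝ) (i : Fin n), i ∉ F → E x i = 0 := fun x i hi =>
    Function.extend_apply' (f := (Subtype.val : F → Fin n)) x 0 i (by rintro ⟨a, rfl⟩; exact hi a.2)
  have hker : LinearMap.ker (L ∘ₗ E) ≠ ⊥ := by
    apply LinearMap.ker_ne_bot_of_finrank_lt
    simpa using hcard
  obtain ⟨x, hx, hx0⟩ := Submodule.exists_mem_ne_zero_of_ne_bot hker
  obtain ⟨i₀, hi₀⟩ := Function.ne_iff.1 hx0
  have hLu : L (E x) = 0 := hx
  have hev : ∀ s : ℝ, ∀ᶠ t in nhdsWithin (0 : ℝ) (Set.Ioi 0), ∀ i, |w i + s * t * E x i| ≤ 1 := by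
    intro s
    rw [Filter.eventually_all]
    intro i
    by_cases hi : i ∈ F
    · have hlt : |w i| < 1 := by simpa [hF] using hi
      have hc : Filter.Tendsto (fun t : ℝ => |w i + s * t * E x i|) (nhds 0)
          (nhds |w i + s * 0 * E x i|) := by
        apply Continuous.tendsto
        fun_prop
      have := hc.eventually (eventually_lt_nhds (b := 1) (by simpa using hlt))
      exact (this.filter_mono nhdsWithin_le_nhds).mono fun t ht => ht.le
    · exact Filter.Eventually.of_forall fun t => by rw [hEout x i hi]; simpa using hw1 i
  obtain ⟨t, ⟨hp, hm⟩, ht⟩ := (((hev 1).and (hev (-1))).and self_mem_nhdsWithin).exists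
  have ht' : 0 < t := ht
  have hmem : ∀ s : ℝ, (∀ i, |w i + s * t * E x i| ≤ 1) → w + (s * t) • E x ∈ K := by
    intro s hs
    rw [hKmem]
    exact ⟨by simpa using hs, by simp [hwL, hLu]⟩
  have heq := hext (hmem 1 hp) (hmem (-1) hm)
    ⟨1 / 2, 1 / 2, by norm_num, by norm_num, by norm_num, by
      ext i; simp only [Pi.add_apply, Pi.smul_apply, smul_eq_mul]; ring⟩
  have h0 := congrFun heq i₀
  simp only [Pi.add_apply, Pi.smul_apply, smul_eq_mul, hEval, one_mul] at h0
  have : t * x i₀ = 0 := by linarith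
  rcases mul_eq_zero.1 this with h | h
  · exact ht'.ne' h
  · exact hi₀ h

/-- Rounding: a zero-sum point of the cube with at most `m` coordinates other than `±1` correlates
with a balanced cut. -/
lemma exists_balanced {n m : ℕ} (w : Fin n → ℝ) (hw : ∑ i, w i = 0) (hw1 : ∀ i, |w i| ≤ 1)
    (hcard : (Finset.univ.filter fun i => |w i| < 1).card ≤ m) :
    ∃ C : Finset (Fin n), C.card = n / 2 ∧ (n : ℝ) - 2 * m ≤ 2 * ∑ i ∈ C, w i := by
  set P := Finset.univ.filter fun i => w i = 1 with hP
  set M := Finset.univ.filter fun i => w i = -1 with hM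
  have hPc : P.card ≤ n / 2 := by
    have h : ∑ i, (2 * (if w i = 1 then (1 : ℝ) else 0) - 1) ≤ ∑ i, w i := by
      refine Finset.sum_le_sum fun i _ => ?_
      have := (abs_le.1 (hw1 i)).1
      split_ifs with h <;> linarith
    rw [Finset.sum_sub_distrib, ← Finset.mul_sum, Finset.sum_boole, hw] at h
    simp only [Finset.sum_const, Finset.card_univ, Fintype.card_fin, nsmul_eq_mul, mul_one] at h
    have h2 : 2 * P.card ≤ n := by
      have : (2 * P.card : ℝ) ≤ n := by linarith
      exact_mod_cast this
    omega
  have hMc : 2 * M.card ≤ n := by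
    have h : ∑ i, w i ≤ ∑ i, (1 - 2 * (if w i = -1 then (1 : ℝ) else 0)) := by
      refine Finset.sum_le_sum fun i _ => ?_
      have := (abs_le.1 (hw1 i)).2
      split_ifs with h <;> linarith
    rw [Finset.sum_sub_distrib, ← Finset.mul_sum, Finset.sum_boole, hw] at h
    simp only [Finset.sum_const, Finset.card_univ, Fintype.card_fin, nsmul_eq_mul, mul_one] at h
    have : (2 * M.card : ℝ) ≤ n := by linarith
    exact_mod_cast this
  have hsub : P ⊆ Mᶜ := by
    intro i hi
    simp only [hP, hM, Finset.mem_filter, Finset.mem_univ, true_and, Finset.mem_compl] at hi ⊢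
    rw [hi]; norm_num
  have hMc' : n / 2 ≤ Mᶜ.card := by
    rw [Finset.card_compl, Fintype.card_fin]; omega
  obtain ⟨C, hPC, hCM, hC⟩ := Finset.exists_subsuperset_card_eq hsub hPc hMc'
  refine ⟨C, hC, ?_⟩
  have hterm : ∑ i, (1 - 2 * (if |w i| < 1 then (1 : ℝ) else 0))
      ≤ ∑ i, (2 * (if i ∈ C then w i else 0) - w i) := by
    refine Finset.sum_le_sum fun i _ => ?_
    obtain ⟨hl, hu⟩ := abs_le.1 (hw1 i)
    by_cases hlt : |w i| < 1
    · simp only [hlt, if_true]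
      split_ifs <;> linarith
    · have h1 : |w i| = 1 := le_antisymm (hw1 i) (not_lt.1 hlt)
      simp only [hlt, if_false]
      rcases (abs_eq zero_le_one).1 h1 with h | h
      · have : i ∈ C := hPC (by simp [hP, h])
        simp only [this, if_true]; linarith
      · have : i ∉ C := fun hi => by simpa [hM, h] using hCM hi
        simp only [this, if_false]; linarith
  rw [Finset.sum_sub_distrib, ← Finset.mul_sum, Finset.sum_boole, Finset.sum_sub_distrib,
    ← Finset.mul_sum, hw] at hterm
  simp only [Finset.sum_const, Finset.card_univ, Fintype.card_fin, nsmul_eq_mul, mul_one,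
    Finset.sum_ite_mem, Finset.univ_inter] at hterm
  have : ((Finset.univ.filter fun i => |w i| < 1).card : ℝ) ≤ m := by exact_mod_cast hcard
  linarith

/-- For `ε ∈ (0,1)` and `0 < α < (1-ε)³/(108(1+ε))`, for all sufficiently
large `n`: for any `q ≤ α·n` queried cuts `Q₁, …, Q_q ⊆ {1,…,n}` there is a
near-max cut `C` (`n/2 - √(n ln n) ≤ |C| ≤ n/2 + √(n ln n)`) and a
perturbation `z ∈ ℝ^{C(n,2)}` with all entries `≥ -1`, orthogonal to every
query indicator `v_{Qⱼ}`, satisfying `z · v_C ≥ ε²n²/4`. -/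
theorem lp1_high_value (ε α : ℝ) (hε : ε ∈ Set.Ioo (0 : ℝ) 1) (hα0 : 0 < α)
    (hα : α < (1 - ε) ^ 3 / (108 * (1 + ε))) :
    ∃ N : ℕ, ∀ n : ℕ, N ≤ n → ∀ q : ℕ, (q : ℝ) ≤ α * n →
      ∀ Q : Fin q → Finset (Fin n),
      ∃ (C : Finset (Fin n)) (z : PairIdx n → ℝ),
        ((n : ℝ) / 2 - Real.sqrt (n * Real.log n) ≤ C.card) ∧
        ((C.card : ℝ) ≤ (n : ℝ) / 2 + Real.sqrt (n * Real.log n)) ∧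
        (∀ e, -1 ≤ z e) ∧
        (∀ j : Fin q, ∑ e, z e * cutVec n (Q j) e = 0) ∧
        ε ^ 2 * n ^ 2 / 4 ≤ ∑ e, z e * cutVec n C e := by
  obtain ⟨hε0, hε1⟩ := hε
  have hgap : 0 < 1 - ε - 2 * α := by
    have h1 : (1 - ε) ^ 3 / (108 * (1 + ε)) ≤ (1 - ε) / 2 := by
      rw [div_le_div_iff₀ (by positivity) (by norm_num)]
      have h3 : (1 - ε) ^ 3 ≤ (1 - ε) := by
        have := pow_le_of_le_one (by linarith : 0 ≤ 1 - ε) (by linarith) (n := 3) (by norm_num)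
        exact this
      nlinarith
    linarith
  refine ⟨max 3 ⌈2 / (1 - ε - 2 * α)⌉₊, fun n hn q hq Q => ?_⟩
  have hn3 : (3 : ℝ) ≤ n := by exact_mod_cast (le_max_left _ _).trans hn
  have hnbig : 2 ≤ n * (1 - ε - 2 * α) := by
    have h : 2 / (1 - ε - 2 * α) ≤ n :=
      (Nat.le_ceil _).trans (by exact_mod_cast (le_max_right _ _).trans hn)
    rwa [div_le_iff₀ hgap] at h
  -- condition `0` is the total sum, condition `j + 1` the sum over `Q j`
  let L : (Fin n → ℝ) →ₗ[ℝ] (Fin (q + 1) → ℝ) := LinearMap.pi <| Fin.cons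
    (∑ i, LinearMap.proj i) (fun j => ∑ i ∈ Q j, LinearMap.proj i)
  obtain ⟨w, hwL, hw1, hcard⟩ := exists_extreme L
  have hw0 : ∑ i, w i = 0 := by
    simpa [L, LinearMap.sum_apply] using congrFun hwL 0
  have hwQ : ∀ j, ∑ i ∈ Q j, w i = 0 := fun j => by
    simpa [L, LinearMap.sum_apply] using congrFun hwL j.succ
  obtain ⟨C, hC, hCw⟩ := exists_balanced w hw0 hw1 hcard
  have hsqrt : 1 ≤ Real.sqrt (n * Real.log n) := by
    rw [Real.one_le_sqrt]
    have hlog : 1 ≤ Real.log n := by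
      rw [Real.le_log_iff_exp_le (by linarith)]
      linarith [Real.exp_one_lt_d9]
    nlinarith
  have hClow : (n : ℝ) ≤ 2 * C.card + 1 := by
    have : n ≤ 2 * C.card + 1 := by omega
    exact_mod_cast this
  have hCup : 2 * (C.card : ℝ) ≤ n := by
    have : 2 * C.card ≤ n := by omega
    exact_mod_cast this
  refine ⟨C, fun e => -(w e.1.1 * w e.1.2), by linarith, by linarith, fun e => ?_, fun j => ?_, ?_⟩
  · have h : |w e.1.1 * w e.1.2| ≤ 1 := by
      rw [abs_mul]
      exact mul_le_one₀ (hw1 _) (abs_nonneg _) (hw1 _)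
    linarith [(abs_le.1 h).2]
  · rw [sum_neg_mul_cutVec w hw0, hwQ j]; norm_num
  · rw [sum_neg_mul_cutVec w hw0]
    push_cast at hCw
    have h : ε * n / 2 ≤ ∑ i ∈ C, w i := by nlinarith
    calc ε ^ 2 * n ^ 2 / 4 = (ε * n / 2) ^ 2 := by ring
      _ ≤ _ := pow_le_pow_left₀ (by positivity) h 2
end

section
/- For every ε ∈ (0,1) and every α with 0 < α < (1−ε)³/(108(1+ε)) there exists N ∈ ℕ such that for all n ≥ N, all q ≤ α·n, and all subsets Q_1,…,Q_q ⊆ {1,…,n} the following holds: letting V = span(u_{Q_1},…,u_{Q_q}, 1) ⊆ ℝ^n, there exists C ⊆ {1,…,n} with n/2 − √(n·ln n) ≤ |C| ≤ n/2 + √(n·ln n) such that ‖u_C − v‖₁ > ε·n for every v ∈ V. -/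
open Finset

/-- Volume bound for packings: an `η`-separated set in the ball of radius `R` of a
finite-dimensional normed space has at most `(1 + 2R/η) ^ dim` points. -/
theorem card_le_of_separated_of_norm_le {E : Type*} [NormedAddCommGroup E] [NormedSpace ℝ E]
    [FiniteDimensional ℝ E] (s : Finset E) (R η : ℝ) (hR : 0 ≤ R) (hη : 0 < η)
    (hs : ∀ c ∈ s, ‖c‖ ≤ R) (h : ∀ c ∈ s, ∀ d ∈ s, c ≠ d → η ≤ ‖c - d‖) :
    (s.card : ℝ) ≤ (1 + 2 * R / η) ^ Module.finrank ℝ E := by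
  -- The balls of radius `η / 2` around `s` are disjoint and lie in the ball of radius `R + η / 2`.
  borelize E
  let μ : MeasureTheory.Measure E := MeasureTheory.Measure.addHaar
  have hδ : 0 < η / 2 := by positivity
  have hρ : 0 < R + η / 2 := by positivity
  have D : Set.Pairwise (s : Set E)
      (Function.onFun Disjoint fun c => Metric.ball (c : E) (η / 2)) := by
    rintro c hc d hd hcd
    apply Metric.ball_disjoint_ball
    rw [dist_eq_norm]
    linarith [h c hc d hd hcd]
  have A_subset : (⋃ c ∈ s, Metric.ball (c : E) (η / 2)) ⊆ Metric.ball (0 : E) (R + η / 2) := by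
    refine Set.iUnion₂_subset fun x hx => ?_
    apply Metric.ball_subset_ball'
    rw [dist_zero_right]
    linarith [hs x hx]
  have I : (s.card : ENNReal) * ENNReal.ofReal ((η / 2) ^ Module.finrank ℝ E)
        * μ (Metric.ball 0 1) ≤
      ENNReal.ofReal ((R + η / 2) ^ Module.finrank ℝ E) * μ (Metric.ball 0 1) :=
    calc
      _ = μ (⋃ c ∈ s, Metric.ball (c : E) (η / 2)) := by
        rw [MeasureTheory.measure_biUnion_finset D fun c _ => measurableSet_ball]
        simp only [μ.addHaar_ball_of_pos _ hδ]
        simp only [Finset.sum_const, nsmul_eq_mul, mul_assoc]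
      _ ≤ μ (Metric.ball (0 : E) (R + η / 2)) := MeasureTheory.measure_mono A_subset
      _ = _ := by simp only [μ.addHaar_ball_of_pos _ hρ]
  have J := (ENNReal.mul_le_mul_iff_left (Metric.measure_ball_pos μ _ zero_lt_one).ne'
    MeasureTheory.measure_ball_lt_top.ne).1 I
  have K := ENNReal.toReal_le_of_le_ofReal (pow_nonneg hρ.le _) J
  rw [ENNReal.toReal_mul, ENNReal.toReal_natCast, ENNReal.toReal_ofReal (by positivity)] at K
  have e : 1 + 2 * R / η = (R + η / 2) / (η / 2) := by field_simp; ring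
  rw [e, div_pow, le_div_iff₀ (by positivity)]
  exact K

/-- Every finite set `T` contains an `r`-separated subset that is an `r`-net of `T`. -/
theorem exists_separated_net {E : Type*} [SeminormedAddCommGroup E] (r : ℝ) (hr : 0 ≤ r)
    (T : Finset E) : ∃ s ⊆ T, (∀ c ∈ s, ∀ d ∈ s, c ≠ d → r ≤ ‖c - d‖) ∧
      ∀ x ∈ T, ∃ c ∈ s, ‖x - c‖ ≤ r := by
  classical
  induction T using Finset.induction_on with
  | empty => exact ⟨∅, by simp⟩
  | insert a T ha ih =>
    obtain ⟨s, hsT, hsep, hcov⟩ := ih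
    by_cases hc : ∃ c ∈ s, ‖a - c‖ ≤ r
    · refine ⟨s, hsT.trans (subset_insert _ _), hsep, ?_⟩
      intro x hx
      rcases mem_insert.1 hx with rfl | hx
      · exact hc
      · exact hcov x hx
    · push Not at hc
      refine ⟨insert a s, insert_subset_insert _ hsT, ?_, ?_⟩
      · intro c hcs d hds hcd
        rcases mem_insert.1 hcs with hca | hcs' <;> rcases mem_insert.1 hds with hda | hds'
        · exact absurd (hca.trans hda.symm) hcd
        · rw [hca]; exact (hc d hds').le
        · rw [hda, norm_sub_rev]; exact (hc c hcs').le
        · exact hsep c hcs' d hds' hcd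
      · intro x hx
        rcases mem_insert.1 hx with rfl | hx
        · exact ⟨x, mem_insert_self _ _, by simpa using hr⟩
        · obtain ⟨c, hcs, h⟩ := hcov x hx
          exact ⟨c, mem_insert_of_mem hcs, h⟩

/-- Small `ℓ¹` nets for finite bounded subsets of a subspace `V` of `ℝⁿ`. -/
theorem exists_l1_net {n : ℕ} (V : Submodule ℝ (Fin n → ℝ)) (R η : ℝ) (hR : 0 ≤ R) (hη : 0 < η)
    (T : Finset (Fin n → ℝ)) (hTV : ∀ x ∈ T, x ∈ V) (hT : ∀ x ∈ T, ∑ i, |x i| ≤ R) :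
    ∃ s : Finset (Fin n → ℝ), (s.card : ℝ) ≤ (1 + 2 * R / η) ^ Module.finrank ℝ V ∧
      ∀ x ∈ T, ∃ c ∈ s, ∑ i, |x i - c i| ≤ η := by
  classical
  -- `W` is `V` equipped with the `ℓ¹` norm.
  let e : (Fin n → ℝ) ≃ₗ[ℝ] PiLp 1 (fun _ : Fin n => ℝ) := (WithLp.linearEquiv 1 ℝ _).symm
  let W : Submodule ℝ (PiLp 1 (fun _ : Fin n => ℝ)) := V.map (e : _ →ₗ[ℝ] _)
  have hnorm : ∀ x : PiLp 1 (fun _ : Fin n => ℝ), ‖x‖ = ∑ i, |x i| := by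
    intro x
    simp [PiLp.norm_eq_of_L1]
  let f : (x : Fin n → ℝ) → x ∈ V → W := fun x hx => ⟨e x, Submodule.mem_map_of_mem hx⟩
  let T' : Finset W := T.attach.image (fun x => f x.1 (hTV x.1 x.2))
  obtain ⟨s, hsT, hsep, hcov⟩ := exists_separated_net η hη.le T'
  have hcard := card_le_of_separated_of_norm_le s R η hR hη (by
    intro c hc
    obtain ⟨x, -, rfl⟩ := mem_image.1 (hsT hc)
    have := hT x.1 x.2
    rw [Submodule.coe_norm, hnorm]
    exact this) hsep
  have hfin : Module.finrank ℝ W = Module.finrank ℝ V := LinearEquiv.finrank_map_eq e V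
  rw [hfin] at hcard
  refine ⟨s.image (fun w => e.symm w.1), ?_, ?_⟩
  · exact le_trans (by exact_mod_cast card_image_le) hcard
  · intro x hx
    obtain ⟨c, hc, hxc⟩ := hcov (f x (hTV x hx))
      (mem_image.2 ⟨⟨x, hx⟩, mem_attach _ _, rfl⟩)
    refine ⟨e.symm c.1, mem_image_of_mem _ hc, ?_⟩
    rw [Submodule.coe_norm, hnorm] at hxc
    exact hxc

/-- Moment generating function of a Rademacher sum, as a sum over all cuts. -/
theorem sum_exp_signVec {n : ℕ} (t : Fin n → ℝ) :
    ∑ C : Finset (Fin n), Real.exp (∑ i, t i * signVec n C i) =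
      2 ^ n * ∏ i, Real.cosh (t i) := by
  have h1 : ∀ i, Real.exp (t i) + Real.exp (-t i) = 2 * Real.cosh (t i) := by
    intro i; rw [Real.cosh_eq]; ring
  have h2 := Fintype.prod_add (fun i => Real.exp (t i)) (fun i => Real.exp (-t i))
  simp only [h1, prod_mul_distrib, prod_const, card_univ, Fintype.card_fin] at h2
  rw [h2]
  refine sum_congr rfl fun C _ => ?_
  rw [Real.exp_sum, ← prod_mul_prod_compl C]
  congr 1
  · refine prod_congr rfl fun i hi => ?_
    simp [signVec, hi]
  · refine prod_congr rfl fun i hi => ?_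
    simp [signVec, mem_compl.1 hi]

open Classical in
/-- Chernoff's bound for Rademacher sums with coefficients in `[-1, 1]`, as a count of cuts. -/
theorem card_chernoff_s10 {n : ℕ} (hn : 0 < n) (t : Fin n → ℝ) (ht : ∀ i, |t i| ≤ 1) (a : ℝ)
    (ha : 0 ≤ a) :
    (((univ : Finset (Finset (Fin n))).filter
      (fun C => a ≤ ∑ i, t i * signVec n C i)).card : ℝ) ≤
      2 ^ n * Real.exp (-(a ^ 2 / (2 * n))) := by
  have hn' : (0 : ℝ) < n := by exact_mod_cast hn
  -- The optimal exponent.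
  set l : ℝ := a / n with hl
  have hl0 : 0 ≤ l := by positivity
  have h1 : (((univ : Finset (Finset (Fin n))).filter
      (fun C => a ≤ ∑ i, t i * signVec n C i)).card : ℝ) * Real.exp (l * a) ≤
      ∑ C : Finset (Fin n), Real.exp (∑ i, (l * t i) * signVec n C i) := by
    rw [← nsmul_eq_mul, ← sum_const]
    refine le_trans (sum_le_sum ?_) (sum_le_sum_of_subset_of_nonneg (filter_subset _ _)
      fun _ _ _ => (Real.exp_pos _).le)
    intro C hC
    apply Real.exp_le_exp.2
    have := (mem_filter.1 hC).2
    calc l * a ≤ l * ∑ i, t i * signVec n C i := by gcongr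
      _ = _ := by rw [mul_sum]; exact sum_congr rfl fun i _ => by ring
  have h2 : ∏ i, Real.cosh (l * t i) ≤ Real.exp (n * (l ^ 2 / 2)) := by
    calc ∏ i, Real.cosh (l * t i) ≤ ∏ _i : Fin n, Real.exp (l ^ 2 / 2) := by
          refine prod_le_prod (fun i _ => (Real.cosh_pos _).le) fun i _ => ?_
          refine (Real.cosh_le_exp_half_sq _).trans (Real.exp_le_exp.2 ?_)
          have : t i ^ 2 ≤ 1 := (sq_le_one_iff_abs_le_one _).2 (ht i)
          rw [mul_pow]
          nlinarith [sq_nonneg l]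
      _ = _ := by simp [← Real.exp_nat_mul]
  rw [sum_exp_signVec] at h1
  have h3 := h1.trans (mul_le_mul_of_nonneg_left h2 (by positivity : (0 : ℝ) ≤ 2 ^ n))
  rw [← le_div_iff₀ (Real.exp_pos _), mul_div_assoc, ← Real.exp_sub] at h3
  refine h3.trans_eq ?_
  congr 2
  rw [hl]
  field_simp
  ring

open Classical in
/-- Few cuts are within `(1 - θ) n` of a fixed point `c`, because `|s - c i|` averages to at least
`1` over the two signs `s`. -/
theorem card_close_point_le {n : ℕ} (hn : 0 < n) (c : Fin n → ℝ) (θ : ℝ) (hθ : 0 ≤ θ) :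
    (((univ : Finset (Finset (Fin n))).filter
      (fun C => ∑ i, |signVec n C i - c i| ≤ (1 - θ) * n)).card : ℝ) ≤
      2 ^ n * Real.exp (-(θ ^ 2 * n / 2)) := by
  have hn' : (0 : ℝ) < n := by exact_mod_cast hn
  -- `|s - x| = (|1 - x| + |1 + x|) / 2 - s * t` with `t = (|1 + x| - |1 - x|) / 2`.
  let t : Fin n → ℝ := fun i => (|1 + c i| - |1 - c i|) / 2
  have ht : ∀ i, |t i| ≤ 1 := by
    intro i
    simp only [t]
    rw [abs_le]
    constructor <;> cases abs_cases (1 + c i) <;> cases abs_cases (1 - c i) <;> linarith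
  have key : ∀ C : Finset (Fin n), ∀ i, 1 - |signVec n C i - c i| ≤ t i * signVec n C i := by
    intro C i
    simp only [t, signVec]
    split_ifs
    · cases abs_cases (1 + c i) <;> cases abs_cases (1 - c i) <;> linarith
    · rw [show -1 - c i = -(1 + c i) by ring, abs_neg]
      cases abs_cases (1 + c i) <;> cases abs_cases (1 - c i) <;> linarith
  have h := card_chernoff_s10 hn t ht (θ * n) (by positivity)
  have e : (θ * n) ^ 2 / (2 * n) = θ ^ 2 * n / 2 := by field_simp
  rw [e] at h
  refine le_trans ?_ h
  norm_cast
  refine card_le_card fun C hC => ?_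
  simp only [mem_filter, mem_univ, true_and] at hC ⊢
  have := sum_le_sum (s := univ) fun i _ => key C i
  rw [sum_sub_distrib] at this
  simp only [sum_const, card_univ, Fintype.card_fin, nsmul_eq_mul, mul_one] at this
  linarith

open Classical in
/-- Union bound over a net of `V`: few cuts are `ε n`-close to a low-dimensional subspace. -/
theorem card_close_le {n : ℕ} (hn : 0 < n) (V : Submodule ℝ (Fin n → ℝ)) (ε : ℝ) (h0 : 0 < ε)
    (h1 : ε < 1) :
    (((univ : Finset (Finset (Fin n))).filter
      (fun C => ∃ v ∈ V, ∑ i, |signVec n C i - v i| ≤ ε * n)).card : ℝ) ≤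
      (1 + 6 * (1 + ε) / (1 - ε)) ^ Module.finrank ℝ V *
        (2 ^ n * Real.exp (-(2 / 9 * (1 - ε) ^ 2 * n))) := by
  have hn' : (0 : ℝ) < n := by exact_mod_cast hn
  have hδ : 0 < 1 - ε := by linarith
  set B := (univ : Finset (Finset (Fin n))).filter
      (fun C => ∃ v ∈ V, ∑ i, |signVec n C i - v i| ≤ ε * n) with hB
  have hex : ∀ C : Finset (Fin n), ∃ v, C ∈ B → v ∈ V ∧ ∑ i, |signVec n C i - v i| ≤ ε * n := by
    intro C
    by_cases hC : C ∈ B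
    · obtain ⟨v, hv⟩ := (mem_filter.1 hC).2
      exact ⟨v, fun _ => hv⟩
    · exact ⟨0, fun h => absurd h hC⟩
  choose f hf using hex
  obtain ⟨s, hs, hcov⟩ := exists_l1_net V ((1 + ε) * n) ((1 - ε) / 3 * n) (by positivity)
    (by positivity) (B.image f)
    (by
      intro x hx
      obtain ⟨C, hC, rfl⟩ := mem_image.1 hx
      exact (hf C hC).1)
    (by
      intro x hx
      obtain ⟨C, hC, rfl⟩ := mem_image.1 hx
      have h2 : ∀ i, |f C i| ≤ 1 + |signVec n C i - f C i| := by
        intro i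
        have ha : |signVec n C i| = 1 := by
          simp only [signVec]; split_ifs <;> simp
        have := abs_sub_abs_le_abs_sub (f C i) (signVec n C i)
        rw [abs_sub_comm] at this
        linarith
      have := sum_le_sum (s := univ) fun i _ => h2 i
      rw [sum_add_distrib] at this
      simp only [sum_const, card_univ, Fintype.card_fin, nsmul_eq_mul, mul_one] at this
      linarith [(hf C hC).2])
  have e : 1 + 2 * ((1 + ε) * n) / ((1 - ε) / 3 * n) = 1 + 6 * (1 + ε) / (1 - ε) := by
    field_simp; ring
  rw [e] at hs
  have hsub : B ⊆ s.biUnion fun c => (univ : Finset (Finset (Fin n))).filter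
      (fun C => ∑ i, |signVec n C i - c i| ≤ (1 - 2 / 3 * (1 - ε)) * n) := by
    intro C hC
    obtain ⟨c, hc, hfc⟩ := hcov (f C) (mem_image_of_mem f hC)
    refine mem_biUnion.2 ⟨c, hc, mem_filter.2 ⟨mem_univ _, ?_⟩⟩
    have := sum_le_sum (s := univ) fun i _ => abs_sub_le (signVec n C i) (f C i) (c i)
    rw [sum_add_distrib] at this
    linarith [(hf C hC).2]
  have hpt : ∀ c ∈ s, (((univ : Finset (Finset (Fin n))).filter
      (fun C => ∑ i, |signVec n C i - c i| ≤ (1 - 2 / 3 * (1 - ε)) * n)).card : ℝ) ≤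
      2 ^ n * Real.exp (-(2 / 9 * (1 - ε) ^ 2 * n)) := by
    intro c _
    refine (card_close_point_le hn c (2 / 3 * (1 - ε)) (by positivity)).trans_eq ?_
    congr 3
    ring
  calc (B.card : ℝ) ≤ ∑ c ∈ s, (((univ : Finset (Finset (Fin n))).filter
      (fun C => ∑ i, |signVec n C i - c i| ≤ (1 - 2 / 3 * (1 - ε)) * n)).card : ℝ) := by
        exact_mod_cast (card_le_card hsub).trans card_biUnion_le
    _ ≤ s.card * (2 ^ n * Real.exp (-(2 / 9 * (1 - ε) ^ 2 * n))) := by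
        rw [← nsmul_eq_mul]; exact sum_le_card_nsmul _ _ _ hpt
    _ ≤ _ := by gcongr

theorem sum_signVec {n : ℕ} (C : Finset (Fin n)) :
    ∑ i, signVec n C i = 2 * (C.card : ℝ) - n := by
  have h : ∀ i, signVec n C i = 2 * (if i ∈ C then 1 else 0) - 1 := by
    intro i; simp only [signVec]; split_ifs <;> norm_num
  simp only [h, sum_sub_distrib, ← mul_sum]
  simp

open Classical in
/-- Cuts deviating from size `n / 2` by more than `√(n log n)` make up a fraction of at most
`2 * exp (-2 log n) = 2 / n ^ 2` of all cuts. -/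
theorem card_unbalanced_le {n : ℕ} (hn : 0 < n) :
    (((univ : Finset (Finset (Fin n))).filter
      (fun C => ¬ ((n : ℝ) / 2 - Real.sqrt (n * Real.log n) ≤ C.card ∧
        (C.card : ℝ) ≤ (n : ℝ) / 2 + Real.sqrt (n * Real.log n)))).card : ℝ) ≤
      2 ^ n * (2 * Real.exp (-(2 * Real.log n))) := by
  have hn' : (0 : ℝ) < n := by exact_mod_cast hn
  set r := Real.sqrt (n * Real.log n) with hr
  have hlog : 0 ≤ Real.log n := Real.log_natCast_nonneg n
  have hr2 : r ^ 2 = n * Real.log n := Real.sq_sqrt (by positivity)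
  have e : (2 * r) ^ 2 / (2 * n) = 2 * Real.log n := by
    rw [mul_pow, hr2]; field_simp
  have hp := card_chernoff_s10 hn (fun _ => 1) (by simp) (2 * r) (by positivity)
  have hm := card_chernoff_s10 hn (fun _ => -1) (by simp) (2 * r) (by positivity)
  rw [e] at hp hm
  simp only [← mul_sum, sum_signVec] at hp hm
  refine le_trans (b := ((_ : ℕ) + (_ : ℕ) : ℝ)) ?_
    ((add_le_add hp hm).trans_eq (by ring))
  rw [← Nat.cast_add, Nat.cast_le]
  refine (card_le_card fun C hC => ?_).trans (card_union_le _ _)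
  simp only [mem_union, mem_filter, mem_univ, true_and, not_and_or, not_le] at hC ⊢
  rcases hC with hC | hC
  · right; linarith
  · left; linarith

theorem finrank_span_signVec_le {n q : ℕ} (Q : Fin q → Finset (Fin n)) :
    Module.finrank ℝ (Submodule.span ℝ
      (Set.range (fun j : Fin q => signVec n (Q j)) ∪ {fun _ => (1 : ℝ)})) ≤ q + 1 := by
  rw [Submodule.span_union]
  refine (Submodule.finrank_add_le_finrank_add_finrank _ _).trans (add_le_add ?_ ?_)
  · exact (finrank_range_le_card (R := ℝ) (fun j : Fin q => signVec n (Q j))).trans_eq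
      (Fintype.card_fin q)
  · exact (finrank_span_le_card (R := ℝ) ({fun _ => (1 : ℝ)} : Set (Fin n → ℝ))).trans (by simp)

/-- For `ε ∈ (0,1)` and `0 < α < (1-ε)³/(108(1+ε))`, for all sufficiently
large `n`: for any `q ≤ α·n` queried cuts `Q₁, …, Q_q ⊆ {1,…,n}`, letting
`V = span(u_{Q₁}, …, u_{Q_q}, 1) ⊆ ℝⁿ`, there is a near-max cut `C`
(`n/2 - √(n ln n) ≤ |C| ≤ n/2 + √(n ln n)`) with `‖u_C - v‖₁ > ε·n` for every
`v ∈ V`. -/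
theorem nearmax_cut_far_from_span (ε α : ℝ) (hε : ε ∈ Set.Ioo (0 : ℝ) 1)
    (hα0 : 0 < α) (hα : α < (1 - ε) ^ 3 / (108 * (1 + ε))) :
    ∃ N : ℕ, ∀ n : ℕ, N ≤ n → ∀ q : ℕ, (q : ℝ) ≤ α * n →
      ∀ Q : Fin q → Finset (Fin n),
      ∃ C : Finset (Fin n),
        ((n : ℝ) / 2 - Real.sqrt (n * Real.log n) ≤ C.card) ∧
        ((C.card : ℝ) ≤ (n : ℝ) / 2 + Real.sqrt (n * Real.log n)) ∧
        ∀ v ∈ Submodule.span ℝ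
            (Set.range (fun j : Fin q => signVec n (Q j)) ∪ {fun _ => (1 : ℝ)}),
          ε * n < ∑ i, |signVec n C i - v i| := by
  classical
  obtain ⟨h0, h1⟩ := hε
  have hδ : 0 < 1 - ε := by linarith
  set x : ℝ := 6 * (1 + ε) / (1 - ε) with hx
  have hx0 : 0 < x := by positivity
  have hxα : x * α ≤ (1 - ε) ^ 2 / 18 := by
    calc x * α ≤ x * ((1 - ε) ^ 3 / (108 * (1 + ε))) := by gcongr
      _ = _ := by rw [hx]; field_simp; ring
  have hnat : Filter.Tendsto (fun n : ℕ => (n : ℝ)) Filter.atTop Filter.atTop :=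
    tendsto_natCast_atTop_atTop
  have hlim : Filter.Tendsto (fun n : ℕ => Real.exp x * Real.exp (-((1 - ε) ^ 2 / 6 * n)) +
      2 * Real.exp (-(2 * Real.log n))) Filter.atTop (nhds (Real.exp x * 0 + 2 * 0)) := by
    refine Filter.Tendsto.add (Filter.Tendsto.const_mul _ ?_) (Filter.Tendsto.const_mul _ ?_)
    · exact Real.tendsto_exp_neg_atTop_nhds_zero.comp
        (hnat.const_mul_atTop (by positivity))
    · exact Real.tendsto_exp_neg_atTop_nhds_zero.comp
        ((Real.tendsto_log_atTop.comp hnat).const_mul_atTop (by norm_num))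
  have hev := hlim.eventually_lt_const (show Real.exp x * 0 + 2 * 0 < 1 by norm_num)
  obtain ⟨N, hN⟩ := Filter.eventually_atTop.1 hev
  refine ⟨max N 1, fun n hn q hq Q => ?_⟩
  have hn0 : 0 < n := lt_of_lt_of_le one_pos ((le_max_right _ _).trans hn)
  have hsmall := hN n ((le_max_left _ _).trans hn)
  set V := Submodule.span ℝ
    (Set.range (fun j : Fin q => signVec n (Q j)) ∪ {fun _ => (1 : ℝ)}) with hV
  have hrank : (Module.finrank ℝ V : ℝ) ≤ α * n + 1 := by
    have : (Module.finrank ℝ V : ℝ) ≤ q + 1 := by exact_mod_cast finrank_span_signVec_le Q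
    linarith
  have hclose := card_close_le hn0 V ε h0 h1
  have hunb := card_unbalanced_le hn0
  have hpow : (1 + x) ^ Module.finrank ℝ V * Real.exp (-(2 / 9 * (1 - ε) ^ 2 * n)) ≤
      Real.exp x * Real.exp (-((1 - ε) ^ 2 / 6 * n)) := by
    calc _ ≤ Real.exp x ^ Module.finrank ℝ V * Real.exp (-(2 / 9 * (1 - ε) ^ 2 * n)) := by
          gcongr
          linarith [Real.add_one_le_exp x]
      _ = Real.exp (Module.finrank ℝ V * x + -(2 / 9 * (1 - ε) ^ 2 * n)) := by
          rw [← Real.exp_nat_mul, ← Real.exp_add]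
      _ ≤ Real.exp (x + -((1 - ε) ^ 2 / 6 * n)) := by
          apply Real.exp_le_exp.2
          have a1 := mul_le_mul_of_nonneg_right hrank hx0.le
          have a2 := mul_le_mul_of_nonneg_right hxα (Nat.cast_nonneg (α := ℝ) n)
          linarith
      _ = _ := Real.exp_add _ _
  by_contra! hcon
  have hcover : (univ : Finset (Finset (Fin n))) ⊆
      univ.filter (fun C => ∃ v ∈ V, ∑ i, |signVec n C i - v i| ≤ ε * n) ∪
      univ.filter (fun C => ¬ ((n : ℝ) / 2 - Real.sqrt (n * Real.log n) ≤ C.card ∧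
        (C.card : ℝ) ≤ (n : ℝ) / 2 + Real.sqrt (n * Real.log n))) := by
    intro C _
    by_cases hb : (n : ℝ) / 2 - Real.sqrt (n * Real.log n) ≤ C.card ∧
        (C.card : ℝ) ≤ (n : ℝ) / 2 + Real.sqrt (n * Real.log n)
    · exact mem_union_left _ (mem_filter.2 ⟨mem_univ _, hcon C hb.1 hb.2⟩)
    · exact mem_union_right _ (mem_filter.2 ⟨mem_univ _, hb⟩)
  have hc := (card_le_card hcover).trans (card_union_le _ _)
  rw [card_univ, Fintype.card_finset, Fintype.card_fin] at hc
  have hc' : (2 : ℝ) ^ n ≤ _ := (by exact_mod_cast hc :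
    ((2 : ℝ) ^ n ≤ ((_ : ℕ) : ℝ) + ((_ : ℕ) : ℝ))).trans (add_le_add hclose hunb)
  have h2 : (0 : ℝ) < 2 ^ n := by positivity
  have h3 := mul_le_mul_of_nonneg_left hpow h2.le
  have h4 := mul_lt_mul_of_pos_left hsmall h2
  linarith
end

section
/- Let w be a nonnegative weight function on K_n with cut function F, and let c ∈ (0,1). Then the number of subsets U ⊆ {1,…,n} with F(U) < c·max_{S ⊆ {1,…,n}} F(S) is at most 2^n/(2(1−c)); equivalently, a uniformly random subset U of {1,…,n} satisfies Pr[F(U) < c·max_S F(S)] ≤ 1/(2(1−c)). -/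
/-- The cut function of the weight function `w` on `K_n`:
`F(S) = Σ_{i ∈ S, j ∉ S} w_{ij}`. -/
noncomputable def cutFun (n : ℕ) (w : PairIdx n → ℝ) (S : Finset (Fin n)) : ℝ :=
  ∑ e, w e * (if (e.1.1 ∈ S ↔ e.1.2 ∈ S) then 0 else 1)

/-- The maximum cut value `max_{S ⊆ {1,…,n}} F(S)`. -/
noncomputable def maxCutValue (n : ℕ) (w : PairIdx n → ℝ) : ℝ :=
  Finset.univ.sup' Finset.univ_nonempty (cutFun n w)

/-- Each edge is cut by exactly half of the subsets. -/
lemma two_mul_sum_cut_indicator (n : ℕ) (e : PairIdx n) :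
    2 * ∑ S : Finset (Fin n), (if (e.1.1 ∈ S ↔ e.1.2 ∈ S) then (0 : ℝ) else 1) = 2 ^ n := by
  -- `S ↦ S ∆ {i}`, with `i` the smaller endpoint, swaps cutting and not cutting `e`.
  have hflip : ∑ S : Finset (Fin n), (if (e.1.1 ∈ S ↔ e.1.2 ∈ S) then (0 : ℝ) else 1)
      = ∑ S : Finset (Fin n), (if (e.1.1 ∈ S ↔ e.1.2 ∈ S) then (1 : ℝ) else 0) := by
    refine Fintype.sum_equiv (symmDiff_right_involutive ({e.1.1} : Finset (Fin n))).toPerm _ _ ?_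
    intro S
    have hne : e.1.2 ≠ e.1.1 := ne_of_gt e.2
    by_cases h1 : e.1.1 ∈ S <;> by_cases h2 : e.1.2 ∈ S <;>
      simp [Function.Involutive.toPerm, Finset.mem_symmDiff, h1, h2, hne]
  rw [two_mul]
  nth_rewrite 2 [hflip]
  rw [← Finset.sum_add_distrib]
  have hone : ∀ S : Finset (Fin n), (if (e.1.1 ∈ S ↔ e.1.2 ∈ S) then (0 : ℝ) else 1)
      + (if (e.1.1 ∈ S ↔ e.1.2 ∈ S) then (1 : ℝ) else 0) = 1 := by
    intro S
    split_ifs <;> simp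
  simp [hone]

lemma two_mul_sum_cutFun (n : ℕ) (w : PairIdx n → ℝ) :
    2 * ∑ S, cutFun n w S = 2 ^ n * ∑ e, w e := by
  unfold cutFun
  rw [Finset.sum_comm, Finset.mul_sum, Finset.mul_sum]
  refine Finset.sum_congr rfl fun e _ => ?_
  rw [← Finset.mul_sum, ← two_mul_sum_cut_indicator n e]
  ring

lemma cutFun_nonneg (n : ℕ) (w : PairIdx n → ℝ) (hw : ∀ e, 0 ≤ w e) (S : Finset (Fin n)) :
    0 ≤ cutFun n w S :=
  Finset.sum_nonneg fun e _ => mul_nonneg (hw e) (by split_ifs <;> simp)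

lemma cutFun_le_maxCutValue (n : ℕ) (w : PairIdx n → ℝ) (S : Finset (Fin n)) :
    cutFun n w S ≤ maxCutValue n w :=
  Finset.le_sup' (cutFun n w) (Finset.mem_univ S)

lemma maxCutValue_le_sum (n : ℕ) (w : PairIdx n → ℝ) (hw : ∀ e, 0 ≤ w e) :
    maxCutValue n w ≤ ∑ e, w e := by
  refine Finset.sup'_le _ _ fun S _ => Finset.sum_le_sum fun e _ => ?_
  exact mul_le_of_le_one_right (hw e) (by split_ifs <;> simp)

/-- For a nonnegative weight function `w` on `K_n` and `c ∈ (0,1)`, the number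
of subsets `U ⊆ {1,…,n}` whose cut value is less than `c` times the maximum
cut value is at most `2ⁿ / (2(1-c))`; i.e. a uniformly random cut fails to be a
`c`-approximation with probability at most `1/(2(1-c))`. -/
theorem random_cut_approx_count (n : ℕ) (w : PairIdx n → ℝ) (hw : ∀ e, 0 ≤ w e)
    (c : ℝ) (hc0 : 0 < c) (hc1 : c < 1) :
    (Nat.card {U : Finset (Fin n) | cutFun n w U < c * maxCutValue n w} : ℝ)
      ≤ 2 ^ n / (2 * (1 - c)) := by
  classical
  set M := maxCutValue n w with hM
  have hM0 : 0 ≤ M := (cutFun_nonneg n w hw ∅).trans (cutFun_le_maxCutValue n w ∅)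
  have hcard : Nat.card {U : Finset (Fin n) | cutFun n w U < c * M}
      = (Finset.univ.filter fun U => cutFun n w U < c * M).card := by
    rw [Nat.card_eq_card_toFinset, Set.toFinset_setOf]
  rw [hcard]
  set B := Finset.univ.filter fun U => cutFun n w U < c * M with hB
  have hmarkov : (B.card : ℝ) * ((1 - c) * M) ≤ ∑ U, (M - cutFun n w U) := by
    rw [← nsmul_eq_mul]
    calc B.card • ((1 - c) * M) ≤ ∑ U ∈ B, (M - cutFun n w U) := by
          refine Finset.card_nsmul_le_sum _ _ _ fun U hU => ?_
          have := (Finset.mem_filter.mp hU).2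
          linarith
      _ ≤ ∑ U, (M - cutFun n w U) :=
          Finset.sum_le_sum_of_subset_of_nonneg (Finset.subset_univ _) fun U _ _ =>
            sub_nonneg.mpr (cutFun_le_maxCutValue n w U)
  have hsum : ∑ U, (M - cutFun n w U) = 2 ^ n * M - ∑ U, cutFun n w U := by
    simp [Finset.sum_sub_distrib]
  have hhalf : 2 ^ n * M ≤ 2 * ∑ U, cutFun n w U := by
    rw [two_mul_sum_cutFun]
    exact mul_le_mul_of_nonneg_left (maxCutValue_le_sum n w hw) (by positivity)
  rw [le_div_iff₀ (by linarith)]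
  rcases hM0.eq_or_lt with h0 | hpos
  · -- If `M = 0`, a bad set would have a negative cut value.
    have hempty : B = ∅ := by
      refine Finset.filter_eq_empty_iff.mpr fun U _ => ?_
      rw [← h0, mul_zero, not_lt]
      exact cutFun_nonneg n w hw U
    simp [hempty]
  · refine le_of_mul_le_mul_right ?_ hpos
    linarith
end

section
/- Let c ∈ (0, 1/2) and n ≥ 2, and let q = ⌈4·ln n/(1−2c)²⌉. Then there exist subsets Q_1, …, Q_q ⊆ {1,…,n} such that for every pair of distinct i, j ∈ {1,…,n}, the number of indices k ∈ {1,…,q} for which exactly one of i, j lies in Q_k is at least c·q. -/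
/-!
The cuts are obtained by the probabilistic method, phrased as counting over all families
`Q : Fin q → Finset (Fin n)`. For a pair `i ≠ j`, let `cutSign i j S` be `-1` if the pair crosses
`S` and `1` otherwise. Toggling `i` in `S` flips this sign, so for a uniform `S` it is a fair sign,
and the average over `Q` of `exp (d * ∑ k, cutSign i j (Q k))` is `cosh d ^ q ≤ exp (q * d² / 2)`
(`sum_exp_cutSign_family_le`).

Take `d = 1 - 2c`. If the pair crosses fewer than `c * q` cuts of `Q`, the sum of signs exceeds
`d * q`, so the exponential is more than `exp (q * d²)`. If every `Q` had such a pair, summing over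
all families and all `n * (n - 1)` ordered pairs would give
`exp (q * d²) ≤ n * (n - 1) * exp (q * d² / 2)`. But `q * d² / 2 ≥ 2 * log n` by the choice of `q`,
so `exp (q * d² / 2) ≥ n² > n * (n - 1)`, a contradiction.
-/

open Finset

/-- The sign of the pair `i, j` in the cut `S`: `-1` if the pair crosses `S`, and `1` otherwise. -/
noncomputable def cutSign {n : ℕ} (i j : Fin n) (S : Finset (Fin n)) : ℝ :=
  if (i ∈ S ↔ j ∈ S) then 1 else -1

lemma cutSign_symmDiff {n : ℕ} {i j : Fin n} (hij : i ≠ j) (S : Finset (Fin n)) :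
    cutSign i j (symmDiff S {i}) = -cutSign i j S := by
  unfold cutSign
  by_cases hi : i ∈ S <;> by_cases hj : j ∈ S <;>
    simp [Finset.mem_symmDiff, hi, hj, hij.symm]

lemma sum_exp_cutSign {n : ℕ} {i j : Fin n} (hij : i ≠ j) (t : ℝ) :
    ∑ S : Finset (Fin n), Real.exp (t * cutSign i j S) = 2 ^ n * Real.cosh t := by
  have hflip : ∑ S : Finset (Fin n), Real.exp (t * cutSign i j S)
      = ∑ S : Finset (Fin n), Real.exp (-(t * cutSign i j S)) := by
    refine Fintype.sum_equiv (symmDiff_left_involutive ({i} : Finset (Fin n))).toPerm _ _ ?_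
    intro S
    simp [cutSign_symmDiff hij]
  have hpair : ∀ S : Finset (Fin n),
      Real.exp (t * cutSign i j S) + Real.exp (-(t * cutSign i j S)) = 2 * Real.cosh t := by
    intro S
    rw [Real.cosh_eq]
    unfold cutSign
    split_ifs <;> simp <;> ring
  have hsum : ∑ S : Finset (Fin n), (Real.exp (t * cutSign i j S)
      + Real.exp (-(t * cutSign i j S))) = 2 ^ n * (2 * Real.cosh t) := by
    simp [hpair]
  rw [Finset.sum_add_distrib, ← hflip] at hsum
  linarith

/-- The exponential moment bound: the sum over families factors over the `q` independent cuts. -/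
lemma sum_exp_cutSign_family_le {n : ℕ} {i j : Fin n} (hij : i ≠ j) (q : ℕ) (t : ℝ) :
    ∑ Q : Fin q → Finset (Fin n), Real.exp (t * ∑ k, cutSign i j (Q k))
      ≤ (2 ^ n) ^ q * Real.exp (q * t ^ 2 / 2) := by
  have hfactor : ∑ Q : Fin q → Finset (Fin n), Real.exp (t * ∑ k, cutSign i j (Q k))
      = (2 ^ n * Real.cosh t) ^ q := by
    rw [← sum_exp_cutSign hij t, Fintype.sum_pow]
    simp only [Finset.mul_sum, Real.exp_sum]
  have hexp : Real.exp (q * t ^ 2 / 2) = Real.exp (t ^ 2 / 2) ^ q := by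
    rw [← Real.exp_nat_mul]
    ring_nf
  rw [hfactor, mul_pow, hexp]
  gcongr
  exact Real.cosh_le_exp_half_sq t

lemma sum_cutSign_eq {n q : ℕ} (i j : Fin n) (Q : Fin q → Finset (Fin n)) :
    ∑ k, cutSign i j (Q k)
      = q - 2 * (Nat.card {k : Fin q | ¬(i ∈ Q k ↔ j ∈ Q k)} : ℝ) := by
  have hsign : ∀ k, cutSign i j (Q k)
      = 1 - 2 * (if ¬(i ∈ Q k ↔ j ∈ Q k) then (1 : ℝ) else 0) := by
    intro k
    unfold cutSign
    by_cases h : (i ∈ Q k ↔ j ∈ Q k)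
    · simp [h]
    · simp only [h, if_false, not_false_eq_true, if_true]
      norm_num
  have hcard : Nat.card {k : Fin q | ¬(i ∈ Q k ↔ j ∈ Q k)}
      = #{k : Fin q | ¬(i ∈ Q k ↔ j ∈ Q k)} := by
    rw [Nat.card_eq_fintype_card, ← Set.toFinset_card]
    congr 1
    ext k
    simp
  rw [hcard, Finset.sum_congr rfl (fun k _ => hsign k), Finset.sum_sub_distrib,
    ← Finset.mul_sum, Finset.sum_boole]
  simp

/-- For `c ∈ (0, 1/2)` and `n ≥ 2`, with `q = ⌈4 ln n / (1-2c)²⌉`, there exist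
cuts `Q₁, …, Q_q ⊆ {1,…,n}` such that every pair of distinct vertices `i, j`
crosses at least a `c` fraction of these cuts. -/
theorem pseudorandom_cuts_exist (c : ℝ) (hc0 : 0 < c) (hc1 : c < 1 / 2)
    (n : ℕ) (hn : 2 ≤ n) (q : ℕ)
    (hq : q = ⌈4 * Real.log n / (1 - 2 * c) ^ 2⌉₊) :
    ∃ Q : Fin q → Finset (Fin n), ∀ i j : Fin n, i ≠ j →
      c * q ≤ (Nat.card {k : Fin q | ¬(i ∈ Q k ↔ j ∈ Q k)} : ℝ) := by
  by_contra hbad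
  simp only [not_exists, not_forall, exists_prop, not_le] at hbad
  set d : ℝ := 1 - 2 * c with hd
  have hd0 : 0 < d := by linarith
  have hn0 : (0 : ℝ) < n := by positivity
  have hqd : 4 * Real.log n ≤ q * d ^ 2 := by
    rw [← div_le_iff₀ (by positivity), hq]
    exact Nat.le_ceil _
  -- Every family contributes at least `exp (q * d²)`, already through one bad pair.
  have hlower : ∀ Q : Fin q → Finset (Fin n), Real.exp (q * d ^ 2)
      ≤ ∑ p ∈ (univ : Finset (Fin n)).offDiag,
          Real.exp (d * ∑ k, cutSign p.1 p.2 (Q k)) := by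
    intro Q
    obtain ⟨i, j, hij, hlt⟩ := hbad Q
    have hmem : (i, j) ∈ (univ : Finset (Fin n)).offDiag := by simp [hij]
    refine le_trans ?_ (Finset.single_le_sum
      (f := fun p : Fin n × Fin n => Real.exp (d * ∑ k, cutSign p.1 p.2 (Q k)))
      (fun p _ => (Real.exp_pos _).le) hmem)
    rw [Real.exp_le_exp, sum_cutSign_eq]
    have : (q : ℝ) * d ≤ q - 2 * (Nat.card {k : Fin q | ¬(i ∈ Q k ↔ j ∈ Q k)} : ℝ) := by
      rw [hd]
      linarith
    nlinarith
  have htotal : (2 ^ n) ^ q * Real.exp (q * d ^ 2)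
      ≤ (n * n - n) * ((2 ^ n) ^ q * Real.exp (q * d ^ 2 / 2)) := by
    calc (2 ^ n) ^ q * Real.exp (q * d ^ 2)
        = ∑ _Q : Fin q → Finset (Fin n), Real.exp (q * d ^ 2) := by simp
      _ ≤ ∑ Q : Fin q → Finset (Fin n), ∑ p ∈ (univ : Finset (Fin n)).offDiag,
            Real.exp (d * ∑ k, cutSign p.1 p.2 (Q k)) :=
          Finset.sum_le_sum fun Q _ => hlower Q
      _ = ∑ p ∈ (univ : Finset (Fin n)).offDiag, ∑ Q : Fin q → Finset (Fin n),
            Real.exp (d * ∑ k, cutSign p.1 p.2 (Q k)) := Finset.sum_comm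
      _ ≤ ∑ _p ∈ (univ : Finset (Fin n)).offDiag,
            (2 ^ n) ^ q * Real.exp (q * d ^ 2 / 2) :=
          Finset.sum_le_sum fun p hp =>
            sum_exp_cutSign_family_le (Finset.mem_offDiag.1 hp).2.2 q d
      _ = (n * n - n) * ((2 ^ n) ^ q * Real.exp (q * d ^ 2 / 2)) := by
          rw [Finset.sum_const, Finset.offDiag_card, nsmul_eq_mul, Finset.card_univ,
            Fintype.card_fin, Nat.cast_sub (Nat.le_mul_self n), Nat.cast_mul]
  have hsplit : Real.exp (q * d ^ 2)
      = Real.exp (q * d ^ 2 / 2) * Real.exp (q * d ^ 2 / 2) := by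
    rw [← Real.exp_add]
    ring_nf
  have hsq : (n : ℝ) * n ≤ Real.exp (q * d ^ 2 / 2) := by
    calc (n : ℝ) * n = Real.exp (Real.log n + Real.log n) := by
          rw [Real.exp_add, Real.exp_log hn0]
      _ ≤ Real.exp (q * d ^ 2 / 2) := Real.exp_le_exp.2 (by linarith)
  have hpos : 0 < ((2 : ℝ) ^ n) ^ q * Real.exp (q * d ^ 2 / 2) := by positivity
  rw [hsplit] at htotal
  have hle : Real.exp (q * d ^ 2 / 2) ≤ n * n - n :=
    le_of_mul_le_mul_right (by linarith) hpos
  linarith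
end

section
/- Let n ∈ ℕ, c ≥ 0, q ≥ 1, and let Q_1,…,Q_q ⊆ {1,…,n} be such that for every pair of distinct i, j ∈ {1,…,n}, the number of indices k ∈ {1,…,q} with exactly one of i, j in Q_k is at least c·q. Then for every nonnegative weight function w on K_n with cut function F, max_{1 ≤ k ≤ q} F(Q_k) ≥ c·Σ_{i<j} w_{ij} ≥ c·max_{S ⊆ {1,…,n}} F(S). -/
/-- If every pair of distinct vertices crosses at least a `c` fraction of the
cuts `Q₁, …, Q_q` (`q ≥ 1`, `c ≥ 0`), then for every nonnegative weight
function `w` on `K_n`, the largest of the values `F(Q_k)` is at least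
`c · Σ_{i<j} w_{ij}`, which in turn is at least `c` times every cut value
(in particular `c` times the maximum cut value). -/
theorem pseudorandom_cuts_approx (n : ℕ) (c : ℝ) (hc : 0 ≤ c) (q : ℕ)
    (hq : 1 ≤ q) (Q : Fin q → Finset (Fin n))
    (hQ : ∀ i j : Fin n, i ≠ j →
      c * q ≤ (Nat.card {k : Fin q | ¬(i ∈ Q k ↔ j ∈ Q k)} : ℝ))
    (w : PairIdx n → ℝ) (hw : ∀ e, 0 ≤ w e) :
    (∃ k : Fin q, c * ∑ e, w e ≤ cutFun n w (Q k)) ∧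
    ∀ S : Finset (Fin n), c * cutFun n w S ≤ c * ∑ e, w e := by
  constructor
  · have hcross : ∀ e : PairIdx n,
        c * q ≤ ∑ k : Fin q, (if (e.1.1 ∈ Q k ↔ e.1.2 ∈ Q k) then (0 : ℝ) else 1) := by
      intro e
      refine (hQ e.1.1 e.1.2 e.2.ne).trans_eq ?_
      simp_rw [← ite_not (_ ↔ _) (1 : ℝ) 0]
      rw [Finset.sum_boole, Nat.card_eq_fintype_card, Fintype.card_subtype]
      simp only [Set.mem_ofPred_eq]
    have hsum : ∑ _k : Fin q, c * ∑ e, w e ≤ ∑ k : Fin q, cutFun n w (Q k) := by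
      calc ∑ _k : Fin q, c * ∑ e, w e = ∑ e, w e * (c * q) := by
            rw [Finset.sum_const, Finset.card_univ, Fintype.card_fin, nsmul_eq_mul,
              ← Finset.sum_mul]
            ring
        _ ≤ ∑ e, w e * ∑ k : Fin q, (if (e.1.1 ∈ Q k ↔ e.1.2 ∈ Q k) then (0 : ℝ) else 1) :=
            Finset.sum_le_sum fun e _ => mul_le_mul_of_nonneg_left (hcross e) (hw e)
        _ = ∑ k : Fin q, cutFun n w (Q k) := by
            simp_rw [Finset.mul_sum]
            exact Finset.sum_comm
    obtain ⟨k, -, hk⟩ := Finset.exists_le_of_sum_le ⟨⟨0, hq⟩, Finset.mem_univ _⟩ hsum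
    exact ⟨k, hk⟩
  · intro S
    refine mul_le_mul_of_nonneg_left (Finset.sum_le_sum fun e _ => ?_) hc
    split_ifs
    · simpa using hw e
    · simp
end

section
/- Let c > 1/2 and ε > 0 with ε² < (2c−1)/(8c+36), let n ∈ ℕ, and let B ⊆ {1,…,n}. Then the number of subsets A ⊆ {1,…,n} with e(A,B) ≥ c·e(A) is at most 2^n · 4·exp(−ε²·n); equivalently, a uniformly random subset A of {1,…,n} satisfies Pr[e(A,B) ≥ c·e(A)] ≤ 4·exp(−ε²·n). -/
/-!
Write `x_i = ±1` according to whether `i ∈ A`, and let `S`, `T` be the sums of the `x_i` over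
`B` and `Bᶜ`. Then `4 e(A) = n² - (S+T)²` and `4 e(A,B) = 2|B||Bᶜ| - 2ST`. Since
`4|B||Bᶜ| ≤ n²`, the inequality `e(A,B) ≥ c e(A)` implies
`(2c-1) n² ≤ (2c-1)(S+T)² + (S-T)²`. Both `S+T` and `S-T` are signed sums of all `n` of the
`x_i`, and as `4cε² ≤ 2c-1`, one of them has square at least `2ε²n²`. By Hoeffding's inequality
(`card_sq_signedSum_le`) each of these two events holds for at most `2ⁿ · 2 exp(-ε²n)` sets `A`.
-/

/-- The signed sum `∑ σ_i x_i`, where `x_i = 1` if `i ∈ A` and `x_i = -1` otherwise. -/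
def signedSum {n : ℕ} (σ : Fin n → ℝ) (A : Finset (Fin n)) : ℝ :=
  ∑ i, if i ∈ A then σ i else -σ i

lemma sum_exp_signedSum {n : ℕ} (σ : Fin n → ℝ) (t : ℝ) :
    ∑ A : Finset (Fin n), Real.exp (t * signedSum σ A) = ∏ i, (2 * Real.cosh (t * σ i)) := by
  have h : ∀ i, 2 * Real.cosh (t * σ i) = Real.exp (t * σ i) + Real.exp (-(t * σ i)) := by
    intro i
    rw [Real.cosh_eq]
    ring
  simp_rw [h]
  rw [Fintype.prod_add]
  refine Finset.sum_congr rfl fun A _ => ?_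
  rw [signedSum, Finset.mul_sum, Real.exp_sum, ← Finset.prod_mul_prod_compl A]
  congr 1
  · refine Finset.prod_congr rfl fun i hi => ?_
    rw [if_pos hi]
  · refine Finset.prod_congr rfl fun i hi => ?_
    rw [if_neg (Finset.mem_compl.mp hi), mul_neg]

/-- One-sided Hoeffding bound: Chernoff's method, using `cosh t ≤ exp (t² / 2)`. -/
lemma card_signedSum_le {n : ℕ} (σ : Fin n → ℝ) (hσ : ∀ i, σ i ^ 2 = 1) (t : ℝ) (ht : 0 ≤ t) :
    ((Finset.univ.filter fun A : Finset (Fin n) => t * n ≤ signedSum σ A).card : ℝ)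
      ≤ 2 ^ n * Real.exp (-(t ^ 2 / 2 * n)) := by
  have h1 : ((Finset.univ.filter fun A : Finset (Fin n) => t * n ≤ signedSum σ A).card : ℝ)
      * Real.exp (t * (t * n)) ≤ ∑ A : Finset (Fin n), Real.exp (t * signedSum σ A) := by
    rw [← nsmul_eq_mul]
    refine (Finset.card_nsmul_le_sum _ (fun A => Real.exp (t * signedSum σ A)) _ ?_).trans
      (Finset.sum_le_sum_of_subset_of_nonneg (Finset.filter_subset _ _)
        fun _ _ _ => (Real.exp_pos _).le)
    intro A hA
    exact Real.exp_le_exp.mpr (mul_le_mul_of_nonneg_left (Finset.mem_filter.mp hA).2 ht)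
  have h2 : ∏ i, (2 * Real.cosh (t * σ i)) ≤ 2 ^ n * Real.exp (t ^ 2 / 2 * n) := by
    have : ∏ i, (2 * Real.cosh (t * σ i)) ≤ ∏ _i : Fin n, (2 * Real.exp (t ^ 2 / 2)) := by
      refine Finset.prod_le_prod (fun i _ => by positivity) fun i _ => ?_
      have := Real.cosh_le_exp_half_sq (t * σ i)
      rw [mul_pow, hσ, mul_one] at this
      linarith
    refine this.trans_eq ?_
    rw [Finset.prod_const, Finset.card_univ, Fintype.card_fin, mul_pow, ← Real.exp_nat_mul,
      mul_comm (n : ℝ)]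
  rw [sum_exp_signedSum] at h1
  refine le_of_mul_le_mul_right ((h1.trans h2).trans_eq ?_) (Real.exp_pos (t * (t * n)))
  rw [mul_assoc, ← Real.exp_add]
  ring_nf

/-- Two-sided Hoeffding bound, with the threshold `√2 ε n` expressed through squares. -/
lemma card_sq_signedSum_le {n : ℕ} (σ : Fin n → ℝ) (hσ : ∀ i, σ i ^ 2 = 1) (ε : ℝ) (hε : 0 ≤ ε) :
    ((Finset.univ.filter fun A : Finset (Fin n) =>
        2 * ε ^ 2 * (n : ℝ) ^ 2 ≤ signedSum σ A ^ 2).card : ℝ)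
      ≤ 2 ^ n * (2 * Real.exp (-(ε ^ 2 * n))) := by
  set t : ℝ := √2 * ε with ht
  have ht0 : 0 ≤ t := by positivity
  have ht2 : t ^ 2 = 2 * ε ^ 2 := by
    rw [ht, mul_pow, Real.sq_sqrt (by norm_num)]
  have hp := card_signedSum_le σ hσ t ht0
  have hm := card_signedSum_le (fun i => -σ i) (fun i => by rw [neg_sq, hσ]) t ht0
  have hneg : ∀ A, signedSum (fun i => -σ i) A = -signedSum σ A := by
    intro A
    simp only [signedSum, ← Finset.sum_neg_distrib]
    refine Finset.sum_congr rfl fun i _ => ?_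
    split_ifs <;> rfl
  have hsub : (Finset.univ.filter fun A : Finset (Fin n) =>
        2 * ε ^ 2 * (n : ℝ) ^ 2 ≤ signedSum σ A ^ 2) ⊆
      (Finset.univ.filter fun A : Finset (Fin n) => t * n ≤ signedSum σ A) ∪
      (Finset.univ.filter fun A : Finset (Fin n) => t * n ≤ signedSum (fun i => -σ i) A) := by
    intro A hA
    simp only [Finset.mem_union, Finset.mem_filter, Finset.mem_univ, true_and, hneg] at hA ⊢
    rw [← ht2, ← mul_pow] at hA
    exact le_abs.mp ((le_abs_self _).trans (sq_le_sq.mp hA))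
  have hcard := (Finset.card_le_card hsub).trans (Finset.card_union_le _ _)
  have hcard' := (Nat.cast_le (α := ℝ)).mpr hcard
  push_cast at hcard'
  have he : t ^ 2 / 2 * n = ε ^ 2 * n := by
    rw [ht2]
    ring
  rw [he] at hp hm
  linarith

/-- The sign pattern `1` on `B` and `s` on `Bᶜ`; it is used for `s = 1` (giving `S + T`) and
`s = -1` (giving `S - T`). -/
lemma signedSum_eq_card {n : ℕ} (A B : Finset (Fin n)) (s : ℝ) :
    signedSum (fun i => if i ∈ B then 1 else s) A =
      ((A ∩ B).card - (Aᶜ ∩ B).card) + s * ((A ∩ Bᶜ).card - (Aᶜ ∩ Bᶜ).card) := by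
  have hcard : ∀ C : Finset (Fin n), (C.card : ℝ) = ∑ i, if i ∈ C then (1 : ℝ) else 0 := by
    intro C
    simp
  rw [hcard, hcard, hcard, hcard, ← Finset.sum_sub_distrib, ← Finset.sum_sub_distrib,
    Finset.mul_sum, ← Finset.sum_add_distrib, signedSum]
  refine Finset.sum_congr rfl fun i _ => ?_
  by_cases hA : i ∈ A <;> by_cases hB : i ∈ B <;> simp [hA, hB]

/-- Concentration for random bipartitions: let `c > 1/2` and `ε > 0` with
`ε² < (2c-1)/(8c+36)`, and let `B ⊆ {1,…,n}`. Writing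
`e(A) = |A|·(n-|A|)` and `e(A,B) = |A∩B|·|Aᶜ∩Bᶜ| + |A∩Bᶜ|·|Aᶜ∩B|`, the number
of subsets `A ⊆ {1,…,n}` with `e(A,B) ≥ c·e(A)` is at most
`2ⁿ · 4·exp(-ε²·n)`. -/
theorem random_bipartite_concentration (c ε : ℝ) (hc : 1 / 2 < c) (hε : 0 < ε)
    (hε2 : ε ^ 2 < (2 * c - 1) / (8 * c + 36)) (n : ℕ) (B : Finset (Fin n)) :
    (Nat.card {A : Finset (Fin n) |
        c * ((A.card : ℝ) * ((n : ℝ) - A.card)) ≤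
          ((A ∩ B).card : ℝ) * ((Aᶜ ∩ Bᶜ).card : ℝ)
            + ((A ∩ Bᶜ).card : ℝ) * ((Aᶜ ∩ B).card : ℝ)} : ℝ)
      ≤ 2 ^ n * (4 * Real.exp (-(ε ^ 2 * n))) := by
  classical
  have hκ : 4 * c * ε ^ 2 ≤ 2 * c - 1 := by
    rw [lt_div_iff₀ (by linarith)] at hε2
    nlinarith [sq_nonneg ε]
  have h1 := card_sq_signedSum_le (fun i => if i ∈ B then (1 : ℝ) else 1)
    (fun i => by simp) ε hε.le
  have h2 := card_sq_signedSum_le (fun i => if i ∈ B then (1 : ℝ) else -1)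
    (fun i => by split_ifs <;> norm_num) ε hε.le
  rw [Nat.card_eq_fintype_card, ← Set.toFinset_card]
  have hsub : {A : Finset (Fin n) |
        c * ((A.card : ℝ) * ((n : ℝ) - A.card)) ≤
          ((A ∩ B).card : ℝ) * ((Aᶜ ∩ Bᶜ).card : ℝ)
            + ((A ∩ Bᶜ).card : ℝ) * ((Aᶜ ∩ B).card : ℝ)}.toFinset ⊆
      (Finset.univ.filter fun A : Finset (Fin n) => 2 * ε ^ 2 * (n : ℝ) ^ 2 ≤
        signedSum (fun i => if i ∈ B then (1 : ℝ) else 1) A ^ 2) ∪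
      (Finset.univ.filter fun A : Finset (Fin n) => 2 * ε ^ 2 * (n : ℝ) ^ 2 ≤
        signedSum (fun i => if i ∈ B then (1 : ℝ) else -1) A ^ 2) := by
    intro A hA
    simp only [Set.mem_toFinset, Set.mem_ofPred_eq] at hA
    simp only [Finset.mem_union, Finset.mem_filter, Finset.mem_univ, true_and,
      signedSum_eq_card]
    have hAcard : (A.card : ℝ) = (A ∩ B).card + (A ∩ Bᶜ).card := by
      rw [← Finset.sdiff_eq_inter_compl]
      exact_mod_cast (Finset.card_inter_add_card_sdiff A B).symm
    have hAccard : (Aᶜ.card : ℝ) = (Aᶜ ∩ B).card + (Aᶜ ∩ Bᶜ).card := by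
      rw [← Finset.sdiff_eq_inter_compl]
      exact_mod_cast (Finset.card_inter_add_card_sdiff Aᶜ B).symm
    have hn : (n : ℝ) = A.card + Aᶜ.card := by
      have := Finset.card_add_card_compl A
      rw [Fintype.card_fin] at this
      exact_mod_cast this.symm
    rw [hAccard, hAcard] at hn
    rw [hAcard] at hA
    generalize ((A ∩ B).card : ℝ) = p at *
    generalize ((A ∩ Bᶜ).card : ℝ) = q at *
    generalize ((Aᶜ ∩ B).card : ℝ) = r at *
    generalize ((Aᶜ ∩ Bᶜ).card : ℝ) = u at *
    by_contra! hcon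
    obtain ⟨hU, hV⟩ := hcon
    have key : (2 * c - 1) * (n : ℝ) ^ 2 ≤
        (2 * c - 1) * (p - r + 1 * (q - u)) ^ 2 + (p - r + -1 * (q - u)) ^ 2 := by
      rw [hn] at hA ⊢
      -- the discarded square is `(|B| - |Bᶜ|)²`
      nlinarith [sq_nonneg (p + r - q - u)]
    have hU' := mul_le_mul_of_nonneg_left hU.le (by linarith : 0 ≤ 2 * c - 1)
    have hκ' := mul_le_mul_of_nonneg_right hκ (sq_nonneg (n : ℝ))
    linarith
  have hcard' := (Nat.cast_le (α := ℝ)).mpr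
    ((Finset.card_le_card hsub).trans (Finset.card_union_le _ _))
  push_cast at hcard'
  refine hcard'.trans ((add_le_add h1 h2).trans_eq ?_)
  ring
end

section
/- Let w be a nonnegative weight function on K_n and let κ ≥ 0. If S and T are κ-strong subsets of {1,…,n} with S ∩ T ≠ ∅, then S ∪ T is κ-strong. -/
/-! A nontrivial cut `U` of `S ∪ T` must split `S` or `T` nontrivially: if it split neither, then
each of `S` and `T` would lie entirely inside or entirely outside `U`, and a common point of `S` and
`T` would put them on the same side, making `U` trivial. As the weights are nonnegative, the cut
that `U` induces on the set it splits weighs at most the whole cut. -/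

/-- A set `S ⊆ {1,…,n}` is `κ`-strong for the (symmetric) weight function `w`
on `K_n` if every nontrivial cut of the induced subgraph on `S` has crossing
weight at least `κ`. -/
def IsStrongSet (n : ℕ) (w : Fin n → Fin n → ℝ) (κ : ℝ) (S : Finset (Fin n)) : Prop :=
  ∀ T : Finset (Fin n), T ⊆ S → T.Nonempty → T ≠ S →
    κ ≤ ∑ i ∈ T, ∑ j ∈ S \ T, w i j

/-- A cut of a larger set `V` that splits a strong set `A ⊆ V` weighs at least `κ`. -/
theorem IsStrongSet.le_cut_of_split {n : ℕ} {w : Fin n → Fin n → ℝ} {κ : ℝ}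
    {A V U : Finset (Fin n)} (hw : ∀ i j, 0 ≤ w i j) (hA : IsStrongSet n w κ A) (hAV : A ⊆ V)
    (hne : (U ∩ A).Nonempty) (hnA : ¬ A ⊆ U) :
    κ ≤ ∑ i ∈ U, ∑ j ∈ V \ U, w i j := by
  refine (hA (U ∩ A) Finset.inter_subset_right hne
    fun h => hnA (Finset.inter_eq_right.mp h)).trans ?_
  calc ∑ i ∈ U ∩ A, ∑ j ∈ A \ (U ∩ A), w i j
      ≤ ∑ i ∈ U ∩ A, ∑ j ∈ V \ U, w i j := by
        refine Finset.sum_le_sum fun i _ =>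
          Finset.sum_le_sum_of_subset_of_nonneg ?_ fun j _ _ => hw i j
        intro j hj
        have := @hAV j
        simp only [Finset.mem_sdiff, Finset.mem_inter] at hj ⊢
        tauto
    _ ≤ ∑ i ∈ U, ∑ j ∈ V \ U, w i j :=
        Finset.sum_le_sum_of_subset_of_nonneg Finset.inter_subset_left
          fun i _ _ => Finset.sum_nonneg fun j _ => hw i j

/-- If `S` and `T` are `κ`-strong sets with nonempty intersection, then
`S ∪ T` is `κ`-strong. -/
theorem strong_sets_union (n : ℕ) (w : Fin n → Fin n → ℝ)
    (hw : ∀ i j, 0 ≤ w i j) (hsymm : ∀ i j, w i j = w j i)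
    (κ : ℝ) (hκ : 0 ≤ κ) (S T : Finset (Fin n))
    (hS : IsStrongSet n w κ S) (hT : IsStrongSet n w κ T)
    (hST : (S ∩ T).Nonempty) : IsStrongSet n w κ (S ∪ T) := by
  intro U hU hne hneq
  by_cases h1 : (U ∩ S).Nonempty ∧ ¬ S ⊆ U
  · exact hS.le_cut_of_split hw Finset.subset_union_left h1.1 h1.2
  by_cases h2 : (U ∩ T).Nonempty ∧ ¬ T ⊆ U
  · exact hT.le_cut_of_split hw Finset.subset_union_right h2.1 h2.2
  exfalso
  have h1' : (U ∩ S).Nonempty → S ⊆ U := fun h => by_contra fun h' => h1 ⟨h, h'⟩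
  have h2' : (U ∩ T).Nonempty → T ⊆ U := fun h => by_contra fun h' => h2 ⟨h, h'⟩
  obtain ⟨x, hx⟩ := hST
  obtain ⟨hxS, hxT⟩ := Finset.mem_inter.mp hx
  -- `U` meets `S` or `T`, hence contains that set and so the common point `x`.
  have hxU : x ∈ U := by
    obtain ⟨u, hu⟩ := hne
    rcases Finset.mem_union.mp (hU hu) with h | h
    · exact h1' ⟨u, Finset.mem_inter.mpr ⟨hu, h⟩⟩ hxS
    · exact h2' ⟨u, Finset.mem_inter.mpr ⟨hu, h⟩⟩ hxT
  exact hneq (hU.antisymm (Finset.union_subset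
    (h1' ⟨x, Finset.mem_inter.mpr ⟨hxU, hxS⟩⟩) (h2' ⟨x, Finset.mem_inter.mpr ⟨hxU, hxT⟩⟩)))
end
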